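/- arXiv:2211.07952 — 5 statements merged into one kernel-verified Lean document; each statement's English description precedes it below -/
import Mathlib

section
/- If a density operator on a finite-dimensional n-partite Hilbert space is a product across the cut A_1⋯A_k | A_{k+1}⋯A_n, i.e., ρ^{A_1⋯A_n} = ρ^{A_1⋯A_k} ⊗ ρ^{A_{k+1}⋯A_n}, then I'(A_1:A_2:⋯:A_n) = I'(A_1:⋯:A_k) + I'(A_{k+1}:⋯:A_n); in particular, for a four-partite state with ρ^{ABCD} = ρ^{AB} ⊗ ρ^{CD}, I'(A:B:C:D) = I'(A:B) + I'(C:D). -/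
open scoped BigOperators ComplexOrder
open Matrix

noncomputable section

/-- The function `x ↦ -x·log₂ x` (with the convention `0·log₂ 0 = 0`). -/
def negxlog2 (x : ℝ) : ℝ := -(x * Real.logb 2 x)

/-- The von Neumann entropy (base 2), `S(ρ) = -Tr(ρ log₂ ρ)`, computed as the sum of
`-λ log₂ λ` over the eigenvalues of a Hermitian matrix (junk value `0` otherwise). -/
def vnEntropy {n : Type} [Fintype n] [DecidableEq n] (ρ : Matrix n n ℂ) : ℝ :=
  if h : ρ.IsHermitian then ∑ i, negxlog2 (h.eigenvalues i) else 0

/-- The Tsallis q-entropy `S_q(ρ) = (1 - Tr ρ^q)/(q-1)`, computed via eigenvalues. -/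
def tsallisEntropy (q : ℝ) {n : Type} [Fintype n] [DecidableEq n] (ρ : Matrix n n ℂ) : ℝ :=
  if h : ρ.IsHermitian then (1 - ∑ i, (h.eigenvalues i) ^ q) / (q - 1) else 0

/-- A density operator: positive semidefinite with unit trace. -/
def IsDensity {n : Type} [Fintype n] [DecidableEq n] (ρ : Matrix n n ℂ) : Prop :=
  ρ.PosSemidef ∧ ρ.trace = 1

/-- rank-one projection `|ψ⟩⟨ψ|`. -/
def outer {α : Type} (ψ : α → ℂ) : Matrix α α ℂ :=
  fun a b => ψ a * (starRingEnd ℂ) (ψ b)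

section multi

variable {ι : Type} [Fintype ι] [DecidableEq ι] {d : ι → Type}
  [∀ i, Fintype (d i)] [∀ i, DecidableEq (d i)]

/-- Combine an assignment of basis indices on the parties in `s` with one on the
complementary parties. -/
def combine (s : Finset ι) (x : (i : {j // j ∈ s}) → d i.1) (z : (i : {j // j ∉ s}) → d i.1)
    (i : ι) : d i :=
  if h : i ∈ s then x ⟨i, h⟩ else z ⟨i, h⟩

/-- The reduced state on the parties in `s`: partial trace over the complementary parties. -/
def pTr (ρ : Matrix (∀ i, d i) (∀ i, d i) ℂ) (s : Finset ι) :
    Matrix ((i : {j // j ∈ s}) → d i.1) ((i : {j // j ∈ s}) → d i.1) ℂ :=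
  fun x y => ∑ z : (i : {j // j ∉ s}) → d i.1, ρ (combine s x z) (combine s y z)

/-- von Neumann entropy of the reduced state on `s`. -/
def Sv (ρ : Matrix (∀ i, d i) (∀ i, d i) ℂ) (s : Finset ι) : ℝ := vnEntropy (pTr ρ s)

/-- Tsallis q-entropy of the reduced state on `s`. -/
def Sq (q : ℝ) (ρ : Matrix (∀ i, d i) (∀ i, d i) ℂ) (s : Finset ι) : ℝ :=
  tsallisEntropy q (pTr ρ s)

/-- Multipartite quantum mutual information `I(X₁:⋯:X_k) = Σ_s S(X_s) - S(X₁⋯X_k)` of a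
partition `P` (each block a finset of parties, treated as a single party). -/
def MI (ρ : Matrix (∀ i, d i) (∀ i, d i) ℂ) (P : Finset (Finset ι)) : ℝ :=
  (∑ X ∈ P, Sv ρ X) - Sv ρ (P.sup id)

/-- Dual multipartite quantum mutual information
`I'(X₁:⋯:X_k) = Σ_s S(X̄_s) - (k-1) S(X₁⋯X_k)`, where `X̄_s` is the union of all blocks
other than `X_s`. -/
def MI' (ρ : Matrix (∀ i, d i) (∀ i, d i) ℂ) (P : Finset (Finset ι)) : ℝ :=
  (∑ X ∈ P, Sv ρ (P.sup id \ X)) - ((P.card : ℝ) - 1) * Sv ρ (P.sup id)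

/-- Tsallis multipartite quantum mutual information. -/
def MIq (q : ℝ) (ρ : Matrix (∀ i, d i) (∀ i, d i) ℂ) (P : Finset (Finset ι)) : ℝ :=
  (∑ X ∈ P, Sq q ρ X) - Sq q ρ (P.sup id)

/-- Tsallis dual multipartite quantum mutual information. -/
def MIq' (q : ℝ) (ρ : Matrix (∀ i, d i) (∀ i, d i) ℂ) (P : Finset (Finset ι)) : ℝ :=
  (∑ X ∈ P, Sq q ρ (P.sup id \ X)) - ((P.card : ℝ) - 1) * Sq q ρ (P.sup id)

/-- The finest partition of the set `s` of parties: each party its own block. -/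
def finest (s : Finset ι) : Finset (Finset ι) := s.image fun i => {i}

end multi

/-- A partition (of a subsystem): nonempty pairwise disjoint blocks. -/
def IsPartition {ι : Type} [DecidableEq ι] (P : Finset (Finset ι)) : Prop :=
  (∀ X ∈ P, X.Nonempty) ∧ (P : Set (Finset ι)).PairwiseDisjoint id

/-- One coarsening step: (a) discarding whole blocks, (b) merging blocks into one block,
(c) discarding some parties from within a block containing at least two parties. -/
inductive CoarserStep {ι : Type} [DecidableEq ι] : Finset (Finset ι) → Finset (Finset ι) → Prop
  | discard {P Q : Finset (Finset ι)} (hQP : Q ⊆ P) (hQ : Q.Nonempty) : CoarserStep P Q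
  | merge (P T : Finset (Finset ι)) (hT : T ⊆ P) (hT' : T.Nonempty) :
      CoarserStep P (insert (T.sup id) (P \ T))
  | shrink (P : Finset (Finset ι)) (X X' : Finset ι) (hX : X ∈ P) (h2 : 2 ≤ X.card)
      (hsub : X' ⊆ X) (hne : X'.Nonempty) : CoarserStep P (insert X' (P.erase X))

/-- `Coarser P Q` : the partition `Q` is coarser than `P` (`P ≻ Q`). -/
def Coarser {ι : Type} [DecidableEq ι] (P Q : Finset (Finset ι)) : Prop :=
  Relation.ReflTransGen CoarserStep P Q

end

section helpers

lemma vnEntropy_of_unitary_diag {n : Type} [Fintype n] [DecidableEq n] (A U V : Matrix n n ℂ)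
    (hA : A.IsHermitian) (f : n → ℝ) (hVU : V * U = 1)
    (h : A = U * diagonal (fun i => (f i : ℂ)) * V) :
    vnEntropy A = ∑ i, negxlog2 (f i) := by
  have hUV : U * V = 1 := mul_eq_one_comm.mp hVU
  have hc : A.charpoly = (diagonal (fun i => (f i : ℂ))).charpoly := by
    rw [h, mul_assoc, Matrix.charpoly_mul_comm, mul_assoc, hVU, mul_one]
  have hr := hA.roots_charpoly_eq_eigenvalues
  rw [hc, Matrix.charpoly_diagonal, Polynomial.roots_prod _ _
    (Finset.prod_ne_zero_iff.mpr fun i _ => Polynomial.X_sub_C_ne_zero _)] at hr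
  simp only [Polynomial.roots_X_sub_C, Multiset.bind_singleton] at hr
  have h2 := congrArg (fun m => (m.map (fun z : ℂ => negxlog2 z.re)).sum) hr
  simp only [Multiset.map_map, Function.comp_def] at h2
  rw [vnEntropy, dif_pos hA]
  exact h2.symm

lemma vnEntropy_reindex {m n : Type} [Fintype m] [DecidableEq m] [Fintype n] [DecidableEq n]
    (e : m ≃ n) (A : Matrix m m ℂ) (hA : A.IsHermitian) :
    vnEntropy (reindex e e A) = vnEntropy A := by
  have hB : (reindex e e A).IsHermitian := by
    simpa using hA.submatrix e.symm
  have h1 := hA.roots_charpoly_eq_eigenvalues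
  have h2 := hB.roots_charpoly_eq_eigenvalues
  rw [Matrix.charpoly_reindex, h1] at h2
  have h3 := congrArg (fun m => (m.map (fun z : ℂ => negxlog2 z.re)).sum) h2
  simp only [Multiset.map_map, Function.comp_def] at h3
  rw [vnEntropy, dif_pos hB, vnEntropy, dif_pos hA]
  exact h3.symm

lemma negxlog2_mul (x y : ℝ) : negxlog2 (x * y) = negxlog2 x * y + x * negxlog2 y := by
  unfold negxlog2
  by_cases hx : x = 0
  · simp [hx]
  by_cases hy : y = 0
  · simp [hy]
  rw [Real.logb_mul hx hy]; ring

lemma sum_eig {n : Type} [Fintype n] [DecidableEq n] (A : Matrix n n ℂ)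
    (hA : A.IsHermitian) (ht : A.trace = 1) : ∑ i, hA.eigenvalues i = 1 := by
  have := hA.trace_eq_sum_eigenvalues
  rw [ht] at this
  have h2 := congrArg Complex.re this
  simpa using h2.symm

open scoped Kronecker in
lemma vnEntropy_kronecker {m n : Type} [Fintype m] [DecidableEq m] [Fintype n] [DecidableEq n]
    (A : Matrix m m ℂ) (B : Matrix n n ℂ) (hA : A.IsHermitian) (hB : B.IsHermitian)
    (hA1 : A.trace = 1) (hB1 : B.trace = 1) :
    (A ⊗ₖ B).IsHermitian ∧ vnEntropy (A ⊗ₖ B) = vnEntropy A + vnEntropy B := by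
  have hAB : (A ⊗ₖ B).IsHermitian := by
    rw [IsHermitian, conjTranspose_kronecker, hA.eq, hB.eq]
  refine ⟨hAB, ?_⟩
  have eA := hA.spectral_theorem
  have eB := hB.spectral_theorem
  rw [Unitary.conjStarAlgAut_apply] at eA eB
  have key : vnEntropy (A ⊗ₖ B) =
      ∑ p : m × n, negxlog2 (hA.eigenvalues p.1 * hB.eigenvalues p.2) := by
    refine vnEntropy_of_unitary_diag _
      ((hA.eigenvectorUnitary : Matrix m m ℂ) ⊗ₖ (hB.eigenvectorUnitary : Matrix n n ℂ))
      ((star hA.eigenvectorUnitary : Matrix m m ℂ) ⊗ₖ (star hB.eigenvectorUnitary : Matrix n n ℂ))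
      hAB _ ?_ ?_
    · rw [← mul_kronecker_mul]
      simp
    · conv_lhs => rw [eA, eB]
      rw [mul_kronecker_mul, mul_kronecker_mul, diagonal_kronecker_diagonal]
      simp
  rw [key, Fintype.sum_prod_type]
  simp only [negxlog2_mul, Finset.sum_add_distrib, ← Finset.mul_sum, ← Finset.sum_mul,
    sum_eig B hB hB1, sum_eig A hA hA1]
  rw [vnEntropy, dif_pos hA, vnEntropy, dif_pos hB]
  ring

variable {ι : Type} [Fintype ι] [DecidableEq ι] {d : ι → Type}
  [∀ i, Fintype (d i)] [∀ i, DecidableEq (d i)]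

lemma pTr_herm (ρ : Matrix (∀ i, d i) (∀ i, d i) ℂ) (h : ρ.IsHermitian) (t : Finset ι) :
    (pTr ρ t).IsHermitian := by
  ext x y
  simp only [conjTranspose_apply, pTr, star_sum]
  exact Finset.sum_congr rfl fun z _ => h.apply _ _

lemma pTr_trace (ρ : Matrix (∀ i, d i) (∀ i, d i) ℂ) (t : Finset ι) :
    (pTr ρ t).trace = ρ.trace := by
  simp only [trace, diag_apply, pTr]
  rw [← Fintype.sum_prod_type']
  exact Fintype.sum_equiv (Equiv.piEquivPiSubtypeProd (fun i => i ∈ t) d).symm _ _ fun p => rfl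

/-- The reduced state evaluated on full configurations. -/
def fT (ρ : Matrix (∀ i, d i) (∀ i, d i) ℂ) (t : Finset ι) (X Y : ∀ i, d i) : ℂ :=
  pTr ρ t (fun i => X i.1) (fun i => Y i.1)

lemma fT_update (ρ : Matrix (∀ i, d i) (∀ i, d i) ℂ) (t : Finset ι) (X Y : ∀ i, d i)
    (i : ι) (hi : i ∉ t) (a b : d i) :
    fT ρ t (Function.update X i a) (Function.update Y i b) = fT ρ t X Y := by
  unfold fT
  congr 1 <;> funext j <;> rw [Function.update_of_ne] <;> rintro rfl <;> exact hi j.2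

lemma fT_univ (ρ : Matrix (∀ i, d i) (∀ i, d i) ℂ) (X Y : ∀ i, d i) :
    fT ρ Finset.univ X Y = ρ X Y := by
  unfold fT pTr
  haveI : IsEmpty {j : ι // j ∉ (Finset.univ : Finset ι)} := ⟨fun j => j.2 (Finset.mem_univ _)⟩
  rw [Fintype.sum_unique]
  congr 1 <;> funext j <;> simp [combine]

/-- splitting off the coordinate `i`. -/
def splitEquiv (t : Finset ι) (i : ι) (hi : i ∈ t) :
    ((j : {j // j ∉ t.erase i}) → d j.1) ≃ d i × ((j : {j // j ∉ t}) → d j.1) where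
  toFun z := (z ⟨i, by simp⟩, fun j => z ⟨j.1, fun h => j.2 (Finset.mem_of_mem_erase h)⟩)
  invFun p j := if h : j.1 = i then cast (congrArg d h.symm) p.1 else p.2 ⟨j.1, fun h' => j.2 (by simp [h, h'])⟩
  left_inv z := by
    funext j
    obtain ⟨j, hj⟩ := j
    by_cases h : j = i
    · subst h; simp
    · simp [h]
  right_inv p := by
    obtain ⟨a, z⟩ := p
    ext1
    · simp
    · funext j
      have : j.1 ≠ i := by rintro rfl; exact j.2 hi
      simp [this]

lemma fT_erase (ρ : Matrix (∀ i, d i) (∀ i, d i) ℂ) (t : Finset ι) (X Y : ∀ i, d i)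
    (i : ι) (hi : i ∈ t) :
    fT ρ (t.erase i) X Y = ∑ a : d i, fT ρ t (Function.update X i a) (Function.update Y i a) := by
  unfold fT pTr
  rw [← Fintype.sum_prod_type']
  refine Fintype.sum_equiv (splitEquiv t i hi) _ _ fun z => ?_
  have key : ∀ W : ∀ i, d i, combine (t.erase i) (fun j => W j.1) z =
      combine t (fun j => Function.update W i (splitEquiv t i hi z).1 j.1)
        (splitEquiv t i hi z).2 := by
    intro W
    funext j
    by_cases h : j = i
    · subst h; simp [combine, splitEquiv, hi]
    · by_cases h' : j ∈ t <;> simp [combine, splitEquiv, h, h']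
  rw [key X, key Y]

lemma fT_prod (ρ : Matrix (∀ i, d i) (∀ i, d i) ℂ) (s : Finset ι)
    (hprod : ∀ x y, ρ x y = fT ρ s x y * fT ρ sᶜ x y) (r : Finset ι) :
    ∀ X Y, fT ρ rᶜ X Y = fT ρ (s \ r) X Y * fT ρ (sᶜ \ r) X Y := by
  induction r using Finset.induction_on with
  | empty => intro X Y; simpa [fT_univ] using hprod X Y
  | insert i r hi ih =>
    intro X Y
    rw [Finset.compl_insert, fT_erase _ _ _ _ _ (by simpa using hi)]
    simp only [ih]
    by_cases his : i ∈ s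
    · have e1 : s \ insert i r = (s \ r).erase i := by ext; simp; tauto
      have e2 : sᶜ \ insert i r = sᶜ \ r := by
        ext j; simp only [Finset.mem_sdiff, Finset.mem_compl, Finset.mem_insert]
        grind
      rw [e1, e2, fT_erase _ _ _ _ _ (by simp [hi, his]), Finset.sum_mul]
      exact Finset.sum_congr rfl fun a _ => by rw [fT_update ρ (sᶜ \ r) _ _ _ (by simp [his])]
    · have e1 : sᶜ \ insert i r = (sᶜ \ r).erase i := by ext; simp; tauto
      have e2 : s \ insert i r = s \ r := by
        ext j; simp only [Finset.mem_sdiff, Finset.mem_insert]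
        grind
      rw [e1, e2, fT_erase _ _ _ _ _ (by simp [hi, his]), Finset.mul_sum]
      exact Finset.sum_congr rfl fun a _ => by rw [fT_update ρ (s \ r) _ _ _ (by simp [his])]

/-- splitting configurations over a disjoint union. -/
def unionEquiv (t u v : Finset ι) (h : ∀ j, j ∈ t ↔ j ∈ u ∨ j ∈ v) (hd : ∀ j ∈ u, j ∉ v) :
    ((j : {j // j ∈ t}) → d j.1) ≃
      ((j : {j // j ∈ u}) → d j.1) × ((j : {j // j ∈ v}) → d j.1) where
  toFun x := (fun j => x ⟨j.1, (h _).2 (Or.inl j.2)⟩, fun j => x ⟨j.1, (h _).2 (Or.inr j.2)⟩)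
  invFun p j := if hj : j.1 ∈ u then p.1 ⟨j.1, hj⟩ else
    p.2 ⟨j.1, ((h _).1 j.2).resolve_left hj⟩
  left_inv x := by funext j; simp
  right_inv p := by
    obtain ⟨a, b⟩ := p
    ext1
    · funext j; simp
    · funext j
      have : j.1 ∉ u := fun hu => hd _ hu j.2
      simp [this]

open scoped Kronecker in
lemma Sv_add (ρ : Matrix (∀ i, d i) (∀ i, d i) ℂ) (hρ : IsDensity ρ) (s : Finset ι)
    (hprod : ∀ x y, ρ x y = fT ρ s x y * fT ρ sᶜ x y) (r : Finset ι) :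
    Sv ρ rᶜ = Sv ρ (s \ r) + Sv ρ (sᶜ \ r) := by
  have hH := hρ.1.isHermitian
  have hne : Nonempty (∀ i, d i) := by
    by_contra hn
    rw [not_nonempty_iff] at hn
    have := hρ.2
    simp [trace] at this
  obtain ⟨W⟩ := hne
  have hk := vnEntropy_kronecker (pTr ρ (s \ r)) (pTr ρ (sᶜ \ r)) (pTr_herm ρ hH _)
    (pTr_herm ρ hH _) ((pTr_trace _ _).trans hρ.2) ((pTr_trace _ _).trans hρ.2)
  unfold Sv
  rw [← hk.2]
  let e := unionEquiv (d := d) rᶜ (s \ r) (sᶜ \ r) (by intro j; simp; tauto)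
    (by intro j; simp; tauto)
  rw [← vnEntropy_reindex e.symm _ hk.1]
  congr 1
  ext x y
  have := fT_prod ρ s hprod r (combine rᶜ x (fun j => W j.1)) (combine rᶜ y (fun j => W j.1))
  have hx : ∀ x : (j : {j // j ∈ rᶜ}) → d j.1,
      (fun j : {j // j ∈ rᶜ} => combine rᶜ x (fun j => W j.1) j.1) = x := by
    intro x; funext j; exact dif_pos j.2
  have hx1 : ∀ x : (j : {j // j ∈ rᶜ}) → d j.1,
      (fun j : {j // j ∈ s \ r} => combine rᶜ x (fun j => W j.1) j.1) = (e x).1 := by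
    intro x; funext j; exact dif_pos (Finset.mem_compl.2 (Finset.mem_sdiff.1 j.2).2)
  have hx2 : ∀ x : (j : {j // j ∈ rᶜ}) → d j.1,
      (fun j : {j // j ∈ sᶜ \ r} => combine rᶜ x (fun j => W j.1) j.1) = (e x).2 := by
    intro x; funext j; exact dif_pos (Finset.mem_compl.2 (Finset.mem_sdiff.1 j.2).2)
  unfold fT at this
  rw [hx, hx, hx1, hx1, hx2, hx2] at this
  rw [this]
  simp [reindex_apply, kroneckerMap_apply]

lemma MI'_finest (ρ : Matrix (∀ i, d i) (∀ i, d i) ℂ) (s : Finset ι) :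
    MI' ρ (finest s) = (∑ i ∈ s, Sv ρ (s \ {i})) - ((s.card : ℝ) - 1) * Sv ρ s := by
  have hsup : (finest s).sup id = s := by
    ext j; simp [finest, Finset.mem_sup]
  have hinj : Function.Injective (fun i : ι => ({i} : Finset ι)) := Finset.singleton_injective
  unfold MI'
  rw [hsup]
  unfold finest
  rw [Finset.sum_image (fun _ _ _ _ h => hinj h), Finset.card_image_of_injective _ hinj]

end helpers

/-- If a density operator is a product across the cut `s | sᶜ`,
i.e. `ρ = ρ^s ⊗ ρ^{sᶜ}`, then
`I'(A_1:⋯:A_n) = I'(parties in s) + I'(parties in sᶜ)` (in particular, for a four-partite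
state with `ρ^{ABCD} = ρ^{AB}⊗ρ^{CD}`, `I'(A:B:C:D) = I'(A:B) + I'(C:D)`). -/
theorem dualMutualInfo_additive_of_product
    {ι : Type} [Fintype ι] [DecidableEq ι] {d : ι → Type}
    [∀ i, Fintype (d i)] [∀ i, DecidableEq (d i)]
    (ρ : Matrix (∀ i, d i) (∀ i, d i) ℂ) (hρ : IsDensity ρ) (s : Finset ι)
    (hprod : ∀ x y : ∀ i, d i,
      ρ x y = pTr ρ s (fun i => x i.1) (fun i => y i.1)
                * pTr ρ sᶜ (fun i => x i.1) (fun i => y i.1)) :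
    MI' ρ (finest Finset.univ) = MI' ρ (finest s) + MI' ρ (finest sᶜ) := by
  have hS := Sv_add ρ hρ s hprod
  rw [MI'_finest, MI'_finest, MI'_finest]
  have h0 := hS ∅
  simp only [Finset.compl_empty, Finset.sdiff_empty] at h0
  have h1 : ∀ i ∈ s, Sv ρ (Finset.univ \ {i}) = Sv ρ (s \ {i}) + Sv ρ sᶜ := by
    intro i hi
    rw [← Finset.compl_eq_univ_sdiff, hS {i}]
    congr 2
    exact Finset.sdiff_eq_self_of_disjoint (by simp [hi])
  have h2 : ∀ i ∈ sᶜ, Sv ρ (Finset.univ \ {i}) = Sv ρ s + Sv ρ (sᶜ \ {i}) := by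
    intro i hi
    rw [← Finset.compl_eq_univ_sdiff, hS {i}]
    congr 2
    exact Finset.sdiff_eq_self_of_disjoint (by simpa using hi)
  have hc : (s.card : ℝ) + (sᶜ.card : ℝ) = (Finset.univ : Finset ι).card := by
    exact_mod_cast Finset.card_add_card_compl s
  rw [← Finset.sum_add_sum_compl s, Finset.sum_congr rfl h1, Finset.sum_congr rfl h2,
    Finset.sum_add_distrib, Finset.sum_add_distrib, Finset.sum_const, Finset.sum_const, h0, ← hc,
    nsmul_eq_mul, nsmul_eq_mul]
  ring
end

section
/- The dual multipartite quantum mutual information I' is neither completely monogamous nor tightly complete monogamous: the three-qubit density operator ρ = ½|000⟩⟨000| + ½|111⟩⟨111| satisfies I'(A:B:C) = I'(A:B) = 1 and I'(A:B:C) = I(A:BC) = 1, yet I(A:C) = I(B:C) = 1 > 0. -/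
open scoped BigOperators ComplexOrder
open Matrix

/-- The three-qubit state `ρ = ½|000⟩⟨000| + ½|111⟩⟨111|`. -/
noncomputable def ghzc3 : Matrix (∀ _ : Fin 3, Fin 2) (∀ _ : Fin 3, Fin 2) ℂ :=
  fun a b =>
    (if a = (fun _ => 0) ∧ b = (fun _ => 0) then (1 / 2 : ℂ) else 0)
      + (if a = (fun _ => 1) ∧ b = (fun _ => 1) then (1 / 2 : ℂ) else 0)

theorem vnEntropy_diag_aux {n : Type} [Fintype n] [DecidableEq n] (f : n → ℝ) :
    vnEntropy (Matrix.diagonal (fun i => (f i : ℂ))) = ∑ i, negxlog2 (f i) := by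
  have h : (Matrix.diagonal (fun i => (f i : ℂ))).IsHermitian := by
    rw [Matrix.isHermitian_diagonal_iff]
    intro i
    simp [IsSelfAdjoint]
  unfold vnEntropy
  rw [dif_pos h]
  have h1 := h.roots_charpoly_eq_eigenvalues
  rw [Matrix.charpoly_diagonal, Polynomial.roots_prod _ _ (by
      simp [Finset.prod_ne_zero_iff, Polynomial.X_sub_C_ne_zero])] at h1
  simp only [Polynomial.roots_X_sub_C, Multiset.bind_singleton] at h1
  have h2 := congrArg (fun m => (m.map (fun z : ℂ => negxlog2 z.re)).sum) h1
  simp only [Multiset.map_map, Function.comp_def] at h2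
  simpa using h2.symm

theorem combine_eq_const_aux (s : Finset (Fin 3)) (c : Fin 2)
    (x : (i : {j // j ∈ s}) → Fin 2) (z : (i : {j // j ∉ s}) → Fin 2) :
    (combine (d := fun _ => Fin 2) s x z = fun _ => c) ↔ (x = fun _ => c) ∧ (z = fun _ => c) := by
  constructor
  · intro h
    refine ⟨funext fun i => ?_, funext fun i => ?_⟩
    · have := congrFun h i.1
      simpa [combine, i.2] using this
    · have := congrFun h i.1
      simpa [combine, i.2] using this
  · rintro ⟨rfl, rfl⟩
    funext i
    simp [combine]

theorem pTr_ghzc3_aux (s : Finset (Fin 3)) (hs : s.Nonempty) :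
    pTr ghzc3 s = Matrix.diagonal (fun x => (((if x = (fun _ => 0) then (1/2 : ℝ) else 0)
      + (if x = (fun _ => 1) then (1/2 : ℝ) else 0) : ℝ) : ℂ)) := by
  ext x y
  have key : ∀ c : Fin 2, (∑ z : (i : {j // j ∉ s}) → Fin 2,
      (if (combine (d := fun _ => Fin 2) s x z = fun _ => c) ∧
        (combine (d := fun _ => Fin 2) s y z = fun _ => c) then (1/2 : ℂ) else 0))
      = if x = (fun _ => c) ∧ y = (fun _ => c) then 1/2 else 0 := by
    intro c
    rw [Finset.sum_eq_single (fun _ => c)]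
    · simp only [combine_eq_const_aux, and_true]
    · intro z _ hz
      simp [combine_eq_const_aux, hz]
    · simp
  simp only [pTr, ghzc3, Finset.sum_add_distrib]
  rw [key 0, key 1, Matrix.diagonal_apply]
  by_cases hxy : x = y
  · subst hxy
    simp only [and_self, if_true]
    push_cast
    split_ifs <;> norm_num
  · rw [if_neg hxy, if_neg, if_neg]
    · simp
    · rintro ⟨h1, h2⟩
      exact hxy (h1.trans h2.symm)
    · rintro ⟨h1, h2⟩
      exact hxy (h1.trans h2.symm)

theorem Sv_ghzc3_aux (s : Finset (Fin 3)) (hs : s.Nonempty) : Sv ghzc3 s = 1 := by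
  obtain ⟨i, hi⟩ := hs
  have hne : (fun _ => 0 : (i : {j // j ∈ s}) → Fin 2) ≠ (fun _ => 1) := by
    intro h
    have := congrFun h ⟨i, hi⟩
    simp at this
  have hl : negxlog2 (1/2) = 1/2 := by
    simp [negxlog2, Real.logb_inv]
  have h0 : negxlog2 0 = 0 := by simp [negxlog2]
  unfold Sv
  rw [pTr_ghzc3_aux s ⟨i, hi⟩, vnEntropy_diag_aux]
  have : ∀ x : (i : {j // j ∈ s}) → Fin 2,
      negxlog2 ((if x = (fun _ => 0) then (1/2 : ℝ) else 0)
      + (if x = (fun _ => 1) then (1/2 : ℝ) else 0)) =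
      (if x = (fun _ => 0) then (1/2 : ℝ) else 0) + (if x = (fun _ => 1) then (1/2 : ℝ) else 0) := by
    intro x
    by_cases h : x = fun _ => 0
    · have h' : ¬ (x = fun _ => 1) := fun h' => hne (h.symm.trans h')
      rw [if_pos h, if_neg h', add_zero, hl]
    · rw [if_neg h]
      split_ifs
      · rw [zero_add, hl]
      · rw [zero_add, h0]
  rw [Finset.sum_congr rfl (fun x _ => this x), Finset.sum_add_distrib]
  simp only [Finset.sum_ite_eq', Finset.mem_univ, if_true]
  norm_num

theorem MI_ghzc3_aux (X Y : Finset (Fin 3)) (hX : X.Nonempty) (hY : Y.Nonempty) (h : X ≠ Y) :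
    MI ghzc3 {X, Y} = 1 := by
  unfold MI
  rw [Finset.sum_pair h, Sv_ghzc3_aux X hX, Sv_ghzc3_aux Y hY, Sv_ghzc3_aux]
  · norm_num
  · simpa using hX.mono Finset.subset_union_left

/-- `I'` is neither completely monogamous nor tightly complete monogamous:
the three-qubit state `ρ = ½|000⟩⟨000| + ½|111⟩⟨111|` satisfies
`I'(A:B:C) = I'(A:B) = 1` and `I'(A:B:C) = I(A:BC) = 1`, yet `I(A:C) = I(B:C) = 1 > 0`. -/
theorem dualMutualInfo_not_completely_monogamous :
    MI' ghzc3 {({0} : Finset (Fin 3)), {1}, {2}} = 1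
    ∧ MI ghzc3 {({0} : Finset (Fin 3)), {1}} = 1
    ∧ MI ghzc3 {({0} : Finset (Fin 3)), {1, 2}} = 1
    ∧ MI ghzc3 {({0} : Finset (Fin 3)), {2}} = 1
    ∧ MI ghzc3 {({1} : Finset (Fin 3)), {2}} = 1
    ∧ 0 < MI ghzc3 {({0} : Finset (Fin 3)), {2}}
    ∧ 0 < MI ghzc3 {({1} : Finset (Fin 3)), {2}} := by
  have e1 : MI ghzc3 {({0} : Finset (Fin 3)), {1}} = 1 :=
    MI_ghzc3_aux _ _ (by decide) (by decide) (by decide)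
  have e2 : MI ghzc3 {({0} : Finset (Fin 3)), {1, 2}} = 1 :=
    MI_ghzc3_aux _ _ (by decide) (by decide) (by decide)
  have e3 : MI ghzc3 {({0} : Finset (Fin 3)), {2}} = 1 :=
    MI_ghzc3_aux _ _ (by decide) (by decide) (by decide)
  have e4 : MI ghzc3 {({1} : Finset (Fin 3)), {2}} = 1 :=
    MI_ghzc3_aux _ _ (by decide) (by decide) (by decide)
  refine ⟨?_, e1, e2, e3, e4, by rw [e3]; norm_num, by rw [e4]; norm_num⟩
  unfold MI'
  have hc : ({({0} : Finset (Fin 3)), {1}, {2}} : Finset (Finset (Fin 3))).card = 3 := by decide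
  rw [Finset.sum_congr rfl (g := fun _ => (1 : ℝ)), Finset.sum_const, hc, Sv_ghzc3_aux _ (by decide)]
  · norm_num
  · have hd : ∀ X ∈ ({({0} : Finset (Fin 3)), {1}, {2}} : Finset (Finset (Fin 3))),
        (({({0} : Finset (Fin 3)), {1}, {2}} : Finset (Finset (Fin 3))).sup id \ X).Nonempty := by
      decide
    exact fun X hX => Sv_ghzc3_aux _ (hd X hX)
end

section
/- For every density operator ρ^{AB} on a finite-dimensional bipartite Hilbert space H^A⊗H^B, the equality 1 + Tr((ρ^{AB})²) = Tr((ρ^A)²) + Tr((ρ^B)²) holds if and only if ρ^{AB} = ρ^A ⊗ ρ^B with min{rank(ρ^A), rank(ρ^B)} = 1. Consequently, for q = 2, I_2(A_1:⋯:A_n) = 0 if and only if ρ^{A_1⋯A_n} is a product state with at most one of the reduced states ρ^{A_i} having rank greater than 1. -/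
open scoped BigOperators ComplexOrder
open Matrix

noncomputable section Stmt13

/-- Partial trace over the second factor of a bipartite system. -/
def ptA {A B : Type} [Fintype B] (ρ : Matrix (A × B) (A × B) ℂ) : Matrix A A ℂ :=
  fun a a' => ∑ b, ρ (a, b) (a', b)

/-- Partial trace over the first factor of a bipartite system. -/
def ptB {A B : Type} [Fintype A] (ρ : Matrix (A × B) (A × B) ℂ) : Matrix B B ℂ :=
  fun b b' => ∑ a, ρ (a, b) (a, b')

/-- Tsallis 2-entropy (linear entropy) `S_2(ρ^s) = 1 - Tr((ρ^s)²)` of the reduced state. -/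
def S2 {ι : Type} [Fintype ι] [DecidableEq ι] {d : ι → Type}
    [∀ i, Fintype (d i)] [∀ i, DecidableEq (d i)]
    (ρ : Matrix (∀ i, d i) (∀ i, d i) ℂ) (s : Finset ι) : ℝ :=
  1 - (Matrix.trace (pTr ρ s * pTr ρ s)).re

lemma aux_psd_factor {n : Type} [Fintype n] [DecidableEq n] {ρ : Matrix n n ℂ}
    (h : ρ.PosSemidef) : ∃ B : Matrix n n ℂ, ∀ p q, ρ p q = ∑ k, star (B k p) * B k q := by
  open scoped MatrixOrder in
  obtain ⟨B, hB⟩ := CStarAlgebra.nonneg_iff_eq_star_mul_self.mp h.nonneg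
  refine ⟨B, fun p q => ?_⟩
  rw [hB]
  simp [Matrix.mul_apply, Matrix.star_eq_conjTranspose]

set_option linter.unusedSectionVars false

section aux4
variable {A B K : Type} [Fintype A] [Fintype B] [Fintype K]

def auxG (V : K → A × B → ℂ) (k l : K) (a a' : A) (b b' : B) : ℂ :=
  V k (a, b) * V l (a', b') - V k (a', b) * V l (a, b') - V k (a, b') * V l (a', b)
    + V k (a', b') * V l (a, b)

lemma aux_swapA (h : A → A → B → B → ℂ) :
    ∑ a, ∑ a', ∑ b, ∑ b', h a' a b b' = ∑ a, ∑ a', ∑ b, ∑ b', h a a' b b' :=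
  Finset.sum_comm

lemma aux_swapB (h : A → A → B → B → ℂ) :
    ∑ a, ∑ a', ∑ b, ∑ b', h a a' b' b = ∑ a, ∑ a', ∑ b, ∑ b', h a a' b b' :=
  Finset.sum_congr rfl fun _ _ => Finset.sum_congr rfl fun _ _ => Finset.sum_comm

lemma aux_pull (h : K → A → A → B → B → ℂ) :
    ∑ k, ∑ a, ∑ a', ∑ b, ∑ b', h k a a' b b' = ∑ a, ∑ a', ∑ b, ∑ b', ∑ k, h k a a' b b' := by
  rw [Finset.sum_comm]
  refine Finset.sum_congr rfl fun a _ => ?_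
  rw [Finset.sum_comm]
  refine Finset.sum_congr rfl fun a' _ => ?_
  rw [Finset.sum_comm]
  refine Finset.sum_congr rfl fun b _ => ?_
  rw [Finset.sum_comm]

lemma aux_sq (V : K → A × B → ℂ) (k l : K) :
    ∑ a, ∑ a', ∑ b, ∑ b', star (auxG V k l a a' b b') * auxG V k l a a' b b'
      = 4 * ∑ a, ∑ a', ∑ b, ∑ b', star (V k (a, b) * V l (a', b')) * auxG V k l a a' b b' := by
  have h2 := aux_swapA (fun a a' b b' => star (V k (a, b) * V l (a', b')) * auxG V k l a a' b b')
  have h3 := aux_swapB (fun a a' b b' => star (V k (a, b) * V l (a', b')) * auxG V k l a a' b b')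
  have h4 := aux_swapA
    (fun a a' b b' => star (V k (a, b') * V l (a', b)) * auxG V k l a a' b' b)
  have e : ∀ a a' b b', star (auxG V k l a a' b b') * auxG V k l a a' b b' =
      star (V k (a, b) * V l (a', b')) * auxG V k l a a' b b'
      + star (V k (a', b) * V l (a, b')) * auxG V k l a' a b b'
      + star (V k (a, b') * V l (a', b)) * auxG V k l a a' b' b
      + star (V k (a', b') * V l (a, b)) * auxG V k l a' a b' b := by
    intro a a' b b'
    simp only [auxG, star_add, star_sub]
    ring
  simp only [e, Finset.sum_add_distrib]
  rw [h4, h2, h3]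
  ring

lemma aux_inner {V : K → A × B → ℂ} {ρ : Matrix (A × B) (A × B) ℂ}
    (h : ∀ p q, ρ p q = ∑ k, star (V k p) * V k q) (a a' : A) (b b' : B) :
    ∑ k, ∑ l, star (V k (a, b) * V l (a', b')) * auxG V k l a a' b b' =
      ρ (a, b) (a, b) * ρ (a', b') (a', b') - ρ (a, b) (a', b) * ρ (a', b') (a, b')
      - ρ (a, b) (a, b') * ρ (a', b') (a', b) + ρ (a, b) (a', b') * ρ (a', b') (a, b) := by
  simp only [h, Finset.sum_mul_sum, ← Finset.sum_add_distrib, ← Finset.sum_sub_distrib]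
  refine Finset.sum_congr rfl fun k _ => Finset.sum_congr rfl fun l _ => ?_
  simp only [auxG, star_mul]
  ring

lemma aux_traces (ρ : Matrix (A × B) (A × B) ℂ) (ht : ρ.trace = 1) :
    ∑ a, ∑ a', ∑ b, ∑ b', (ρ (a, b) (a, b) * ρ (a', b') (a', b')
      - ρ (a, b) (a', b) * ρ (a', b') (a, b')
      - ρ (a, b) (a, b') * ρ (a', b') (a', b) + ρ (a, b) (a', b') * ρ (a', b') (a, b))
    = 1 + (ρ * ρ).trace - (ptA ρ * ptA ρ).trace - (ptB ρ * ptB ρ).trace := by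
  have t1 : (1 : ℂ) = ∑ a, ∑ a', ∑ b, ∑ b', ρ (a, b) (a, b) * ρ (a', b') (a', b') := by
    have : (1 : ℂ) = ρ.trace * ρ.trace := by rw [ht]; ring
    rw [this]
    simp only [Matrix.trace, Matrix.diag, Fintype.sum_prod_type, Finset.sum_mul_sum]
  have t2 : (ρ * ρ).trace = ∑ a, ∑ a', ∑ b, ∑ b', ρ (a, b) (a', b') * ρ (a', b') (a, b) := by
    simp only [Matrix.trace, Matrix.diag, Fintype.sum_prod_type, Matrix.mul_apply]
    exact Finset.sum_congr rfl fun _ _ => Finset.sum_comm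
  have t3 : (ptA ρ * ptA ρ).trace
      = ∑ a, ∑ a', ∑ b, ∑ b', ρ (a, b) (a', b) * ρ (a', b') (a, b') := by
    simp only [Matrix.trace, Matrix.diag, Matrix.mul_apply, ptA, Finset.sum_mul_sum]
  have t4 : (ptB ρ * ptB ρ).trace
      = ∑ a, ∑ a', ∑ b, ∑ b', ρ (a, b) (a, b') * ρ (a', b') (a', b) := by
    simp only [Matrix.trace, Matrix.diag, Matrix.mul_apply, ptB, Finset.sum_mul_sum]
    rw [Finset.sum_congr rfl fun _ _ => Finset.sum_comm, Finset.sum_comm]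
    refine Finset.sum_congr rfl fun _ _ => ?_
    rw [Finset.sum_congr rfl fun _ _ => Finset.sum_comm, Finset.sum_comm]
  rw [t2, t3, t4]
  nth_rewrite 1 [t1]
  simp only [Finset.sum_add_distrib, Finset.sum_sub_distrib]
  ring

lemma aux_main {V : K → A × B → ℂ} {ρ : Matrix (A × B) (A × B) ℂ}
    (h : ∀ p q, ρ p q = ∑ k, star (V k p) * V k q) (ht : ρ.trace = 1) :
    ∑ k, ∑ l, ∑ a, ∑ a', ∑ b, ∑ b', ‖auxG V k l a a' b b'‖ ^ 2
    = 4 * (1 + (ρ * ρ).trace.re - (ptA ρ * ptA ρ).trace.re - (ptB ρ * ptB ρ).trace.re) := by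
  have e : ∑ k, ∑ l, ∑ a, ∑ a', ∑ b, ∑ b',
        star (auxG V k l a a' b b') * auxG V k l a a' b b'
      = 4 * (1 + (ρ * ρ).trace - (ptA ρ * ptA ρ).trace - (ptB ρ * ptB ρ).trace) := by
    rw [← aux_traces ρ ht]
    simp only [← aux_inner h, aux_sq, ← Finset.mul_sum]
    congr 1
    refine (Finset.sum_congr rfl fun k _ => aux_pull (fun l a a' b b' =>
      star (V k (a, b) * V l (a', b')) * auxG V k l a a' b b')).trans ?_
    exact aux_pull (fun k a a' b b' => ∑ l,
      star (V k (a, b) * V l (a', b')) * auxG V k l a a' b b')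
  have e2 := congrArg Complex.re e
  have e3 : ∀ z : ℂ, star z * z = ((‖z‖ ^ 2 : ℝ) : ℂ) := by
    intro z
    rw [← Complex.normSq_eq_norm_sq, Complex.normSq_eq_conj_mul_self]; rfl
  simp only [e3, ← Complex.ofReal_sum, Complex.ofReal_re] at e2
  rw [e2]
  simp

/-- Linear entropy is subadditive. -/
lemma aux_ineq [DecidableEq A] [DecidableEq B] {ρ : Matrix (A × B) (A × B) ℂ} (h : IsDensity ρ) :
    (ptA ρ * ptA ρ).trace.re + (ptB ρ * ptB ρ).trace.re ≤ 1 + (ρ * ρ).trace.re := by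
  obtain ⟨V, hV⟩ := aux_psd_factor h.1
  have := aux_main hV h.2
  have h0 : 0 ≤ ∑ k, ∑ l, ∑ a, ∑ a', ∑ b, ∑ b', ‖auxG V k l a a' b b'‖ ^ 2 := by positivity
  linarith

lemma aux_eq [DecidableEq A] [DecidableEq B] {V : K → A × B → ℂ} {ρ : Matrix (A × B) (A × B) ℂ}
    (h : ∀ p q, ρ p q = ∑ k, star (V k p) * V k q) (ht : ρ.trace = 1)
    (he : 1 + (ρ * ρ).trace.re = (ptA ρ * ptA ρ).trace.re + (ptB ρ * ptB ρ).trace.re)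
    (k l : K) (a a' : A) (b b' : B) : auxG V k l a a' b b' = 0 := by
  have := aux_main h ht
  rw [show 1 + (ρ * ρ).trace.re - (ptA ρ * ptA ρ).trace.re - (ptB ρ * ptB ρ).trace.re = 0 by
    linarith, mul_zero] at this
  have s1 := (Finset.sum_eq_zero_iff_of_nonneg fun _ _ => by positivity).1 this k (Finset.mem_univ _)
  have s2 := (Finset.sum_eq_zero_iff_of_nonneg fun _ _ => by positivity).1 s1 l (Finset.mem_univ _)
  have s3 := (Finset.sum_eq_zero_iff_of_nonneg fun _ _ => by positivity).1 s2 a (Finset.mem_univ _)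
  have s4 := (Finset.sum_eq_zero_iff_of_nonneg fun _ _ => by positivity).1 s3 a' (Finset.mem_univ _)
  have s5 := (Finset.sum_eq_zero_iff_of_nonneg fun _ _ => by positivity).1 s4 b (Finset.mem_univ _)
  have s6 := (Finset.sum_eq_zero_iff_of_nonneg fun _ _ => by positivity).1 s5 b' (Finset.mem_univ _)
  simpa using s6

lemma aux_lin {V : K → A × B → ℂ} (hG : ∀ k l a a' b b', auxG V k l a a' b b' = 0)
    {k0 : K} {a0 : A} {b0 : B} (h0 : V k0 (a0, b0) ≠ 0) :
    (∃ α : A → ℂ, ∀ k a b, V k (a, b) = α a * V k (a0, b)) ∨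
    (∃ β : B → ℂ, ∀ k a b, V k (a, b) = β b * V k (a, b0)) := by
  set c := V k0 (a0, b0) with hc
  have hrep0 : ∀ a b, c * V k0 (a, b) = V k0 (a, b0) * V k0 (a0, b) := by
    intro a b
    have := hG k0 k0 a a0 b b0
    simp only [auxG] at this
    linear_combination this / 2
  -- c² V_k(ab) in terms of slices
  have hrep : ∀ k a b, c * c * V k (a, b) = c * V k0 (a0, b) * V k (a, b0)
      + c * V k0 (a, b0) * V k (a0, b) - V k0 (a, b0) * V k0 (a0, b) * V k (a0, b0) := by
    intro k a b
    have := hG k0 k a a0 b b0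
    simp only [auxG] at this
    linear_combination c * this - V k (a0, b0) * hrep0 a b
  let x : K → A → ℂ := fun k a => c * V k (a, b0) - V k0 (a, b0) * V k (a0, b0)
  let y : K → B → ℂ := fun k b => c * V k (a0, b) - V k0 (a0, b) * V k (a0, b0)
  have hxy : ∀ k l a b, x k a * y l b + x l a * y k b = 0 := by
    intro k l a b
    have := hG k l a a0 b b0
    simp only [auxG] at this
    simp only [x, y]
    linear_combination (-c * c) * this + V l (a0, b0) * hrep k a b + V k (a0, b0) * hrep l a b
  by_cases hx : ∀ k a, x k a = 0
  · left
    refine ⟨fun a => V k0 (a, b0) / c, fun k a b => ?_⟩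
    have h1 := hrep k a b
    have h2 := hx k a
    simp only [x] at h2
    field_simp
    have : c * (c * V k (a, b)) = c * (V k0 (a, b0) * V k (a0, b)) := by
      linear_combination h1 + V k0 (a0, b) * h2
    linear_combination mul_left_cancel₀ h0 this
  · right
    push Not at hx
    obtain ⟨k1, a1, hk1⟩ := hx
    have hy1 : ∀ b, y k1 b = 0 := by
      intro b
      have := hxy k1 k1 a1 b
      have : x k1 a1 * y k1 b = 0 := by linear_combination this / 2
      exact (mul_eq_zero.1 this).resolve_left hk1
    have hy : ∀ l b, y l b = 0 := by
      intro l b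
      have := hxy k1 l a1 b
      rw [hy1, mul_zero, add_zero] at this
      exact (mul_eq_zero.1 this).resolve_left hk1
    refine ⟨fun b => V k0 (a0, b) / c, fun k a b => ?_⟩
    have h1 := hrep k a b
    have h2 := hy k b
    simp only [y] at h2
    field_simp
    have : c * (c * V k (a, b)) = c * (V k0 (a0, b) * V k (a, b0)) := by
      linear_combination h1 + V k0 (a, b0) * h2
    linear_combination mul_left_cancel₀ h0 this

end aux4

section auxrank
variable {A B : Type} [Fintype A] [DecidableEq A] [Fintype B] [DecidableEq B]

lemma aux_rank_pos {σ : Matrix A A ℂ} (h : σ.trace = 1) : 1 ≤ σ.rank := by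
  by_contra hlt
  have h0 : σ.rank = 0 := by omega
  have : σ = 0 := by
    rw [Matrix.rank, Submodule.finrank_eq_zero, LinearMap.range_eq_bot] at h0
    ext i j
    have := congrFun (LinearMap.congr_fun h0 (Pi.single j 1)) i
    simpa using this
  rw [this] at h
  simp at h

lemma aux_rank_one_purity {σ : Matrix A A ℂ} (h : σ.trace = 1) (hr : σ.rank ≤ 1) :
    (σ * σ).trace = 1 := by
  rw [Matrix.rank, finrank_le_one_iff] at hr
  obtain ⟨v, hv⟩ := hr
  have hc : ∀ j, ∃ c : ℂ, ∀ i, σ i j = c * v.1 i := by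
    intro j
    obtain ⟨c, hc⟩ := hv ⟨σ.mulVecLin (Pi.single j 1), LinearMap.mem_range_self _ _⟩
    refine ⟨c, fun i => ?_⟩
    have := congrFun (congrArg Subtype.val hc) i
    simp at this
    simp [this]
  choose c hc using hc
  have : (σ * σ).trace = σ.trace * σ.trace := by
    simp only [Matrix.trace, Matrix.diag, Matrix.mul_apply, Finset.sum_mul_sum, hc]
    refine Finset.sum_congr rfl fun _ _ => Finset.sum_congr rfl fun _ _ => ?_
    ring
  rw [this, h, one_mul]

lemma aux_herm_real {σ : Matrix A A ℂ} (h : σ.IsHermitian) :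
    (((σ * σ).trace.re : ℝ) : ℂ) = (σ * σ).trace := by
  rw [← Complex.conj_eq_iff_re]
  have := Matrix.trace_conjTranspose (σ * σ)
  rw [Matrix.conjTranspose_mul, h.eq] at this
  exact this.symm

lemma aux_purity_le {σ : Matrix A A ℂ} (h : IsDensity σ) : (σ * σ).trace.re ≤ 1 := by
  have key : ∀ i j, (σ i j * σ j i).re ≤ (σ i i * σ j j).re := by
    intro i j
    have := (h.1.submatrix ![i, j]).det_nonneg
    rw [Matrix.det_fin_two] at this
    have := (Complex.le_def.1 this).1
    simp at this
    simpa using this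
  have e1 : (σ * σ).trace.re = ∑ i, ∑ j, (σ i j * σ j i).re := by
    simp only [Matrix.trace, Matrix.diag, Matrix.mul_apply, Complex.re_sum]
  have e2 : (σ.trace * σ.trace).re = ∑ i, ∑ j, (σ i i * σ j j).re := by
    simp only [Matrix.trace, Matrix.diag, Finset.sum_mul_sum, Complex.re_sum]
  rw [h.2] at e2
  simp only [mul_one, Complex.one_re] at e2
  rw [e1, e2]
  exact Finset.sum_le_sum fun i _ => Finset.sum_le_sum fun j _ => key i j

lemma aux_ptA_density {ρ : Matrix (A × B) (A × B) ℂ} (h : IsDensity ρ) : IsDensity (ptA ρ) := by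
  constructor
  · have : ptA ρ = ∑ b, ρ.submatrix (fun a => (a, b)) (fun a => (a, b)) := by
      ext a a'
      simp [ptA, Matrix.sum_apply]
    rw [this]
    exact Matrix.posSemidef_sum _ fun b _ => h.1.submatrix _
  · rw [← h.2]
    simp [ptA, Matrix.trace, Fintype.sum_prod_type]

lemma aux_ptB_density {ρ : Matrix (A × B) (A × B) ℂ} (h : IsDensity ρ) : IsDensity (ptB ρ) := by
  constructor
  · have : ptB ρ = ∑ a, ρ.submatrix (fun b => (a, b)) (fun b => (a, b)) := by
      ext a a'
      simp [ptB, Matrix.sum_apply]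
    rw [this]
    exact Matrix.posSemidef_sum _ fun b _ => h.1.submatrix _
  · rw [← h.2]
    simp only [ptB, Matrix.trace, Matrix.diag, Fintype.sum_prod_type]
    exact Finset.sum_comm

lemma aux_prod_purity {ρ : Matrix (A × B) (A × B) ℂ} {σ : Matrix A A ℂ} {τ : Matrix B B ℂ}
    (hp : ∀ p q : A × B, ρ p q = σ p.1 q.1 * τ p.2 q.2) :
    (ρ * ρ).trace = (σ * σ).trace * (τ * τ).trace := by
  simp only [Matrix.trace, Matrix.diag, Matrix.mul_apply, Fintype.sum_prod_type, hp,
    Finset.sum_mul_sum]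
  refine Finset.sum_congr rfl fun _ _ => Finset.sum_congr rfl fun _ _ =>
    Finset.sum_congr rfl fun _ _ => Finset.sum_congr rfl fun _ _ => ?_
  ring

lemma aux_rank_vec {σ : Matrix A A ℂ} (ht : σ.trace = 1) {u v : A → ℂ}
    (h : ∀ i j, σ i j = u i * v j) : σ.rank = 1 := by
  have : σ = Matrix.vecMulVec u v := by ext i j; simp [h, Matrix.vecMulVec_apply]
  have h1 := Matrix.rank_vecMulVec_le u v
  rw [← this] at h1
  exact le_antisymm h1 (aux_rank_pos ht)

lemma aux_part1 {ρ : Matrix (A × B) (A × B) ℂ} (h : IsDensity ρ) :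
    (1 + (Matrix.trace (ρ * ρ)).re
          = (Matrix.trace (ptA ρ * ptA ρ)).re + (Matrix.trace (ptB ρ * ptB ρ)).re
        ↔ ((∀ p q : A × B, ρ p q = ptA ρ p.1 q.1 * ptB ρ p.2 q.2)
            ∧ min (ptA ρ).rank (ptB ρ).rank = 1)) := by
  have dA := aux_ptA_density h
  have dB := aux_ptB_density h
  constructor
  · intro he
    obtain ⟨V, hV⟩ := aux_psd_factor h.1
    have hG := aux_eq hV h.2 he
    have hne : ∃ k0 a0 b0, V k0 (a0, b0) ≠ 0 := by
      by_contra hcon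
      push Not at hcon
      have : ρ.trace = 0 := by
        simp only [Matrix.trace, Matrix.diag, Fintype.sum_prod_type, hV, hcon]
        simp
      rw [h.2] at this
      exact one_ne_zero this
    obtain ⟨k0, a0, b0, h0⟩ := hne
    have rA := aux_rank_pos dA.2
    have rB := aux_rank_pos dB.2
    rcases aux_lin hG h0 with ⟨α, hα⟩ | ⟨β, hβ⟩
    · have hρ : ∀ a b a' b', ρ (a, b) (a', b') = star (α a) * α a' * ρ (a0, b) (a0, b') := by
        intro a b a' b'
        simp only [hV, Finset.mul_sum]
        refine Finset.sum_congr rfl fun k _ => ?_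
        rw [hα k a b, hα k a' b', star_mul]
        ring
      have eA : ∀ a a', ptA ρ a a' = star (α a) * (α a' * ∑ b, ρ (a0, b) (a0, b)) := by
        intro a a'
        simp only [ptA]
        rw [Finset.sum_congr rfl fun b _ => hρ a b a' b, ← Finset.mul_sum, mul_assoc]
      have eB : ∀ b b', ptB ρ b b' = (∑ a, star (α a) * α a) * ρ (a0, b) (a0, b') := by
        intro b b'
        simp only [ptB]
        rw [Finset.sum_congr rfl fun a _ => hρ a b a b', ← Finset.sum_mul]
      have e1 : (∑ a, star (α a) * α a) * ∑ b, ρ (a0, b) (a0, b) = 1 := by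
        rw [← dB.2, Matrix.trace, Finset.mul_sum]
        exact Finset.sum_congr rfl fun b _ => (eB b b).symm
      refine ⟨?_, ?_⟩
      · rintro ⟨a, b⟩ ⟨a', b'⟩
        simp only [eA, eB]
        rw [hρ]
        linear_combination (-star (α a) * α a' * ρ (a0, b) (a0, b')) * e1
      · rw [aux_rank_vec dA.2 eA]
        exact min_eq_left rB
    · have hρ : ∀ a b a' b', ρ (a, b) (a', b') = star (β b) * β b' * ρ (a, b0) (a', b0) := by
        intro a b a' b'
        simp only [hV, Finset.mul_sum]
        refine Finset.sum_congr rfl fun k _ => ?_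
        rw [hβ k a b, hβ k a' b', star_mul]
        ring
      have eB : ∀ b b', ptB ρ b b' = star (β b) * (β b' * ∑ a, ρ (a, b0) (a, b0)) := by
        intro b b'
        simp only [ptB]
        rw [Finset.sum_congr rfl fun a _ => hρ a b a b', ← Finset.mul_sum, mul_assoc]
      have eA : ∀ a a', ptA ρ a a' = (∑ b, star (β b) * β b) * ρ (a, b0) (a', b0) := by
        intro a a'
        simp only [ptA]
        rw [Finset.sum_congr rfl fun b _ => hρ a b a' b, ← Finset.sum_mul]
      have e1 : (∑ b, star (β b) * β b) * ∑ a, ρ (a, b0) (a, b0) = 1 := by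
        rw [← dA.2, Matrix.trace, Finset.mul_sum]
        exact Finset.sum_congr rfl fun a _ => (eA a a).symm
      refine ⟨?_, ?_⟩
      · rintro ⟨a, b⟩ ⟨a', b'⟩
        simp only [eA, eB]
        rw [hρ]
        linear_combination (-star (β b) * β b' * ρ (a, b0) (a', b0)) * e1
      · rw [aux_rank_vec dB.2 eB]
        exact min_eq_right rA
  · rintro ⟨hp, hr⟩
    have e := aux_prod_purity hp
    have e' : (ρ * ρ).trace.re = (ptA ρ * ptA ρ).trace.re * (ptB ρ * ptB ρ).trace.re := by
      rw [e, ← aux_herm_real dA.1.isHermitian, ← aux_herm_real dB.1.isHermitian]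
      simp
    rw [e']
    rcases min_choice (ptA ρ).rank (ptB ρ).rank with hm | hm
    · rw [aux_rank_one_purity dA.2 (by omega)]
      simp
    · rw [aux_rank_one_purity dB.2 (by omega)]
      simp [add_comm]

open scoped Kronecker in
lemma aux_purity_one_rank {σ : Matrix A A ℂ} (h : IsDensity σ) (hp : (σ * σ).trace.re = 1) :
    σ.rank = 1 := by
  have hd : IsDensity (σ ⊗ₖ σ) := ⟨h.1.kronecker h.1, by rw [Matrix.trace_kronecker, h.2, one_mul]⟩
  have ht : ∑ i, σ i i = 1 := h.2
  have eA : ptA (σ ⊗ₖ σ) = σ := by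
    ext a a'
    simp [ptA, Matrix.kroneckerMap_apply, ← Finset.mul_sum, ht]
  have eB : ptB (σ ⊗ₖ σ) = σ := by
    ext a a'
    simp [ptB, Matrix.kroneckerMap_apply, ← Finset.sum_mul, ht]
  have := (aux_part1 hd).1 (by
    rw [eA, eB, aux_prod_purity (ρ := σ ⊗ₖ σ) (σ := σ) (τ := σ) (fun p q => rfl),
      ← aux_herm_real h.1.isHermitian, hp]
    simp)
  rw [eA, eB, min_self] at this
  exact this.2

end auxrank

section auxmulti

variable {ι : Type} [Fintype ι] [DecidableEq ι] {d : ι → Type}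
  [∀ i, Fintype (d i)] [∀ i, DecidableEq (d i)]

/-- splitting an index on `insert i s`. -/
def auxGlue (s : Finset ι) (i : ι) (hi : i ∉ s) :
    (((j : {j // j ∈ s}) → d j.1) × ((j : {j // j ∈ ({i} : Finset ι)}) → d j.1)) ≃
      ((j : {j // j ∈ insert i s}) → d j.1) where
  toFun p j := if h : j.1 ∈ s then p.1 ⟨j.1, h⟩ else
    p.2 ⟨j.1, Finset.mem_singleton.2 ((Finset.mem_insert.1 j.2).resolve_right h)⟩
  invFun x := (fun j => x ⟨j.1, Finset.mem_insert_of_mem j.2⟩,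
    fun j => x ⟨j.1, Finset.mem_insert.2 (Or.inl (Finset.mem_singleton.1 j.2))⟩)
  left_inv p := by
    refine Prod.ext ?_ ?_
    · funext j
      simp [j.2]
    · funext j
      have : j.1 ∉ s := by rw [Finset.mem_singleton.1 j.2]; exact hi
      simp [this]
  right_inv x := by
    funext j
    simp

def auxCo (s : Finset ι) (i : ι) (hi : i ∉ s) :
    (((j : {j // j ∈ ({i} : Finset ι)}) → d j.1) × ((j : {j // j ∉ insert i s}) → d j.1)) ≃
      ((j : {j // j ∉ s}) → d j.1) where
  toFun p j := if h : j.1 ∈ ({i} : Finset ι) then p.1 ⟨j.1, h⟩ else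
    p.2 ⟨j.1, fun h' => (Finset.mem_insert.1 h').elim (fun e => h (Finset.mem_singleton.2 e)) j.2⟩
  invFun x := (fun j => x ⟨j.1, by rw [Finset.mem_singleton.1 j.2]; exact hi⟩,
    fun j => x ⟨j.1, fun h => j.2 (Finset.mem_insert_of_mem h)⟩)
  left_inv p := by
    refine Prod.ext ?_ ?_
    · funext j
      simp [j.2]
    · funext j
      have : j.1 ∉ ({i} : Finset ι) := fun h =>
        j.2 (Finset.mem_insert.2 (Or.inl (Finset.mem_singleton.1 h)))
      simp [this]
  right_inv x := by
    funext j
    dsimp only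
    split_ifs <;> rfl

def auxCo2 (s : Finset ι) (i : ι) (hi : i ∉ s) :
    (((j : {j // j ∈ s}) → d j.1) × ((j : {j // j ∉ insert i s}) → d j.1)) ≃
      ((j : {j // j ∉ ({i} : Finset ι)}) → d j.1) where
  toFun p j := if h : j.1 ∈ s then p.1 ⟨j.1, h⟩ else
    p.2 ⟨j.1, fun h' => (Finset.mem_insert.1 h').elim (fun e => j.2 (Finset.mem_singleton.2 e)) h⟩
  invFun x := (fun j => x ⟨j.1, fun h => hi (by rw [← Finset.mem_singleton.1 h]; exact j.2)⟩,
    fun j => x ⟨j.1, fun h => j.2 (Finset.mem_insert.2 (Or.inl (Finset.mem_singleton.1 h)))⟩)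
  left_inv p := by
    refine Prod.ext ?_ ?_
    · funext j
      simp [j.2]
    · funext j
      have : j.1 ∉ s := fun h => j.2 (Finset.mem_insert_of_mem h)
      simp [this]
  right_inv x := by
    funext j
    dsimp only
    split_ifs <;> rfl

lemma aux_combine1 (s : Finset ι) (i : ι) (hi : i ∉ s) (x : (j : {j // j ∈ s}) → d j.1)
    (u : (j : {j // j ∈ ({i} : Finset ι)}) → d j.1) (z : (j : {j // j ∉ insert i s}) → d j.1) :
    combine (insert i s) (auxGlue s i hi (x, u)) z = combine s x (auxCo s i hi (u, z)) := by
  funext j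
  simp only [combine, auxGlue, auxCo, Equiv.coe_fn_mk, Finset.mem_insert, Finset.mem_singleton]
  by_cases h1 : j ∈ s
  · simp [h1]
  · by_cases h2 : j = i
    · simp [h1, h2]
    · simp [h1, h2]

lemma aux_combine2 (s : Finset ι) (i : ι) (hi : i ∉ s) (x : (j : {j // j ∈ s}) → d j.1)
    (u : (j : {j // j ∈ ({i} : Finset ι)}) → d j.1) (z : (j : {j // j ∉ insert i s}) → d j.1) :
    combine (insert i s) (auxGlue s i hi (x, u)) z = combine {i} u (auxCo2 s i hi (x, z)) := by
  funext j
  simp only [combine, auxGlue, auxCo2, Equiv.coe_fn_mk, Finset.mem_insert, Finset.mem_singleton]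
  by_cases h1 : j ∈ s
  · have : j ≠ i := fun h => hi (h ▸ h1)
    simp [h1, this]
  · by_cases h2 : j = i
    · subst h2
      simp [h1]
    · simp [h1, h2]

def auxTau (ρ : Matrix (∀ i, d i) (∀ i, d i) ℂ) (s : Finset ι) (i : ι) (hi : i ∉ s) :=
  (pTr ρ (insert i s)).submatrix (auxGlue s i hi) (auxGlue s i hi)

lemma aux_tauA (ρ : Matrix (∀ i, d i) (∀ i, d i) ℂ) (s : Finset ι) (i : ι) (hi : i ∉ s) :
    ptA (auxTau ρ s i hi) = pTr ρ s := by
  ext x y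
  simp only [ptA, auxTau, Matrix.submatrix_apply, pTr, aux_combine1]
  rw [← Fintype.sum_prod_type']
  exact Fintype.sum_equiv (auxCo s i hi) _ _ fun p => rfl

lemma aux_tauB (ρ : Matrix (∀ i, d i) (∀ i, d i) ℂ) (s : Finset ι) (i : ι) (hi : i ∉ s) :
    ptB (auxTau ρ s i hi) = pTr ρ {i} := by
  ext x y
  simp only [ptB, auxTau, Matrix.submatrix_apply, pTr, aux_combine2]
  rw [← Fintype.sum_prod_type']
  exact Fintype.sum_equiv (auxCo2 s i hi) _ _ fun p => rfl

def auxSplit (s : Finset ι) :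
    (((j : {j // j ∈ s}) → d j.1) × ((j : {j // j ∉ s}) → d j.1)) ≃ (∀ j, d j) where
  toFun p := combine s p.1 p.2
  invFun x := (fun j => x j.1, fun j => x j.1)
  left_inv p := by
    refine Prod.ext ?_ ?_
    · funext j
      simp [combine, j.2]
    · funext j
      simp [combine, j.2]
  right_inv x := by
    funext j
    simp [combine]

lemma aux_pTr_density {ρ : Matrix (∀ i, d i) (∀ i, d i) ℂ} (h : IsDensity ρ) (s : Finset ι) :
    IsDensity (pTr ρ s) := by
  constructor
  · have : pTr ρ s = ∑ z, ρ.submatrix (fun x => combine s x z) (fun x => combine s x z) := by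
      ext a a'
      simp [pTr, Matrix.sum_apply]
    rw [this]
    exact Matrix.posSemidef_sum _ fun b _ => h.1.submatrix _
  · rw [← h.2]
    simp only [Matrix.trace, Matrix.diag, pTr]
    rw [← Fintype.sum_prod_type']
    exact Fintype.sum_equiv (auxSplit s) _ _ fun p => rfl

lemma aux_purity_equiv {m n : Type} [Fintype m] [Fintype n] (e : m ≃ n) (σ : Matrix n n ℂ) :
    (σ.submatrix e e * σ.submatrix e e).trace = (σ * σ).trace := by
  rw [Matrix.submatrix_mul_equiv]
  simp only [Matrix.trace, Matrix.diag, Matrix.submatrix_apply]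
  exact Equiv.sum_comp e (fun i => (σ * σ) i i)

lemma aux_tau_density {ρ : Matrix (∀ i, d i) (∀ i, d i) ℂ} (h : IsDensity ρ) (s : Finset ι)
    (i : ι) (hi : i ∉ s) : IsDensity (auxTau ρ s i hi) := by
  refine ⟨(aux_pTr_density h _).1.submatrix _, ?_⟩
  rw [← (aux_pTr_density h (insert i s)).2]
  exact Equiv.sum_comp (auxGlue s i hi) (fun x => pTr ρ (insert i s) x x)

lemma aux_univ (ρ : Matrix (∀ i, d i) (∀ i, d i) ℂ) (x y : ∀ i, d i) :
    pTr ρ Finset.univ (fun j => x j.1) (fun j => y j.1) = ρ x y := by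
  have : IsEmpty {j : ι // j ∉ Finset.univ} := ⟨fun j => j.2 (Finset.mem_univ _)⟩
  simp only [pTr]
  rw [Fintype.sum_unique]
  congr 1 <;> (funext j; simp [combine])

lemma aux_univ_purity (ρ : Matrix (∀ i, d i) (∀ i, d i) ℂ) :
    (pTr ρ Finset.univ * pTr ρ Finset.univ).trace = (ρ * ρ).trace := by
  let e : (∀ j, d j) ≃ ((j : {j : ι // j ∈ Finset.univ}) → d j.1) :=
    { toFun := fun x j => x j.1
      invFun := fun x j => x ⟨j, Finset.mem_univ _⟩
      left_inv := fun _ => rfl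
      right_inv := fun _ => rfl }
  rw [← aux_purity_equiv e]
  have : (pTr ρ Finset.univ).submatrix e e = ρ := by
    ext x y
    exact aux_univ ρ x y
  rw [this]

lemma aux_empty_purity {σ : Matrix ((j : {j : ι // j ∈ (∅ : Finset ι)}) → d j.1)
    ((j : {j : ι // j ∈ (∅ : Finset ι)}) → d j.1) ℂ} (h : σ.trace = 1) :
    (σ * σ).trace = 1 ∧ ∀ x y, σ x y = 1 := by
  have : IsEmpty {j : ι // j ∈ (∅ : Finset ι)} := ⟨fun j => Finset.notMem_empty _ j.2⟩
  have h1 : ∀ x y, σ x y = 1 := by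
    intro x y
    rw [Matrix.trace, Fintype.sum_unique] at h
    rw [← h, Subsingleton.elim x default, Subsingleton.elim y default]
    rfl
  refine ⟨?_, h1⟩
  simp [Matrix.trace, Matrix.mul_apply, h1]

lemma aux_chain {ρ : Matrix (∀ i, d i) (∀ i, d i) ℂ} (h : IsDensity ρ) (s : Finset ι) :
    0 ≤ (∑ i ∈ s, S2 ρ {i}) - S2 ρ s ∧ ((∑ i ∈ s, S2 ρ {i}) - S2 ρ s = 0 →
      ∀ x y : ∀ i, d i, pTr ρ s (fun j => x j.1) (fun j => y j.1)
        = ∏ i ∈ s, pTr ρ {i} (fun j => x j.1) (fun j => y j.1)) := by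
  induction s using Finset.induction_on with
  | empty =>
    obtain ⟨h1, h2⟩ := aux_empty_purity (aux_pTr_density h ∅).2
    refine ⟨by simp [S2, h1], fun _ x y => by rw [h2]; simp⟩
  | insert i s hi ih =>
    have hd := aux_tau_density h s i hi
    have hp : (auxTau ρ s i hi * auxTau ρ s i hi).trace
        = (pTr ρ (insert i s) * pTr ρ (insert i s)).trace := aux_purity_equiv _ _
    have hle := aux_ineq hd
    have hiff := aux_part1 hd
    rw [aux_tauA, aux_tauB, hp] at hle hiff
    have e : (∑ j ∈ insert i s, S2 ρ {j}) - S2 ρ (insert i s) =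
        ((∑ j ∈ s, S2 ρ {j}) - S2 ρ s) + (S2 ρ {i} + S2 ρ s - S2 ρ (insert i s)) := by
      rw [Finset.sum_insert hi]; ring
    have hn : 0 ≤ S2 ρ {i} + S2 ρ s - S2 ρ (insert i s) := by
      simp only [S2]; linarith
    refine ⟨by rw [e]; linarith [ih.1], fun h0 x y => ?_⟩
    rw [e] at h0
    have i1 := ih.2 (by linarith [ih.1]) x y
    have h2 : S2 ρ {i} + S2 ρ s - S2 ρ (insert i s) = 0 := by linarith [ih.1]
    have h3 := (hiff.1 (by simp only [S2] at h2; linarith)).1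
      (fun j => x j.1, fun j => x j.1) (fun j => y j.1, fun j => y j.1)
    rw [Finset.prod_insert hi, ← i1, mul_comm]
    refine Eq.trans ?_ h3
    simp only [auxTau, Matrix.submatrix_apply]
    congr 1 <;> (funext j; simp [auxGlue])

lemma aux_prod_multi {ρ : Matrix (∀ i, d i) (∀ i, d i) ℂ}
    (hp : ∀ x y : ∀ i, d i, ρ x y = ∏ i, pTr ρ {i} (fun j => x j.1) (fun j => y j.1)) :
    (ρ * ρ).trace = ∏ i, (pTr ρ {i} * pTr ρ {i}).trace := by
  let e : ∀ i : ι, d i ≃ ((j : {j : ι // j ∈ ({i} : Finset ι)}) → d j.1) := fun i =>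
    { toFun := fun a j => cast (congrArg d (Finset.mem_singleton.1 j.2).symm) a
      invFun := fun x => x ⟨i, Finset.mem_singleton_self i⟩
      left_inv := fun _ => rfl
      right_inv := fun x => by
        funext ⟨j, hj⟩
        obtain rfl := Finset.mem_singleton.1 hj
        rfl }
  have he : ∀ (i : ι) (x : ∀ i, d i), e i (x i) = fun j : {j : ι // j ∈ ({i} : Finset ι)} => x j.1 := by
    intro i x
    rw [← Equiv.eq_symm_apply]
    rfl
  have h1 : ∀ i, (pTr ρ {i} * pTr ρ {i}).trace = ∑ a : d i, ∑ a' : d i,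
      pTr ρ {i} (e i a) (e i a') * pTr ρ {i} (e i a') (e i a) := by
    intro i
    rw [← aux_purity_equiv (e i)]
    rfl
  simp only [h1, Finset.prod_univ_sum, Fintype.piFinset_univ, he]
  simp only [Matrix.trace, Matrix.diag, Matrix.mul_apply]
  refine Finset.sum_congr rfl fun x _ => Finset.sum_congr rfl fun y _ => ?_
  rw [hp x y, hp y x, ← Finset.prod_mul_distrib]

lemma aux_prod_real (p : ι → ℝ) (s : Finset ι) (h0 : ∀ i, 0 ≤ p i) (h1 : ∀ i, p i ≤ 1) :
    1 - ∏ i ∈ s, p i ≤ ∑ i ∈ s, (1 - p i) := by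
  induction s using Finset.induction_on with
  | empty => simp
  | insert i s hi ih =>
    rw [Finset.prod_insert hi, Finset.sum_insert hi]
    have : ∏ i ∈ s, p i ≤ 1 := Finset.prod_le_one (fun i _ => h0 i) fun i _ => h1 i
    nlinarith [h1 i, h0 i]

lemma aux_real_iff (p : ι → ℝ) (h0 : ∀ i, 0 ≤ p i) (h1 : ∀ i, p i ≤ 1) :
    ∑ i, (1 - p i) = 1 - ∏ i, p i ↔ {i | p i ≠ 1}.Subsingleton := by
  constructor
  · intro he i hi j hj
    by_contra hij
    have hi' : p i < 1 := lt_of_le_of_ne (h1 i) hi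
    have hj' : p j < 1 := lt_of_le_of_ne (h1 j) hj
    have hm : j ∈ Finset.univ.erase i := Finset.mem_erase.2 ⟨fun h => hij h.symm, Finset.mem_univ _⟩
    rw [← Finset.add_sum_erase _ _ (Finset.mem_univ i), ← Finset.mul_prod_erase _ _ (Finset.mem_univ i),
      ← Finset.add_sum_erase _ _ hm, ← Finset.mul_prod_erase _ _ hm] at he
    have hb := aux_prod_real p ((Finset.univ.erase i).erase j) h0 h1
    have hq : ∏ k ∈ (Finset.univ.erase i).erase j, p k ≤ 1 :=
      Finset.prod_le_one (fun i _ => h0 i) fun i _ => h1 i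
    set Q := ∏ k ∈ (Finset.univ.erase i).erase j, p k
    have hpq : p i * p j ≤ 1 := mul_le_one₀ (h1 i) (h0 j) (h1 j)
    nlinarith [mul_pos (sub_pos.2 hi') (sub_pos.2 hj'),
      mul_nonneg (sub_nonneg.2 hq) (sub_nonneg.2 hpq)]
  · intro hs
    by_cases hex : ∃ i, p i ≠ 1
    · obtain ⟨i, hi⟩ := hex
      have ho : ∀ j, j ≠ i → p j = 1 := by
        intro j hj
        by_contra hc
        exact hj (hs hc hi)
      rw [Fintype.sum_eq_single i (fun j hj => by rw [ho j hj, sub_self]),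
        Fintype.prod_eq_single i ho]
    · push Not at hex
      simp [hex]

lemma aux_part2 {ρ : Matrix (∀ i, d i) (∀ i, d i) ℂ} (h : IsDensity ρ) :
      ((∑ i, S2 ρ {i}) - S2 ρ Finset.univ = 0
        ↔ ((∀ x y : ∀ i, d i,
              ρ x y = ∏ i, pTr ρ {i} (fun j => x j.1) (fun j => y j.1))
            ∧ {i : ι | 1 < (pTr ρ {i}).rank}.Subsingleton)) := by
  let p : ι → ℝ := fun i => (pTr ρ {i} * pTr ρ {i}).trace.re
  have hD := fun i => aux_pTr_density h ({i} : Finset ι)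
  have h1 : ∀ i, p i ≤ 1 := fun i => aux_purity_le (hD i)
  have h0 : ∀ i, 0 ≤ p i := by
    intro i
    have := Matrix.posSemidef_conjTranspose_mul_self (pTr ρ {i})
    rw [(hD i).1.isHermitian.eq] at this
    exact (Complex.le_def.1 this.trace_nonneg).1
  have hset : {i : ι | 1 < (pTr ρ {i}).rank} = {i | p i ≠ 1} := by
    ext i
    simp only [Set.mem_ofPred_eq]
    constructor
    · intro hr hp
      rw [aux_purity_one_rank (hD i) hp] at hr
      exact lt_irrefl _ hr
    · intro hp
      by_contra hr
      apply hp
      simp only [p]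
      rw [aux_rank_one_purity (hD i).2 (not_lt.1 hr)]
      simp
  have hpur : (∀ x y : ∀ i, d i,
      ρ x y = ∏ i, pTr ρ {i} (fun j => x j.1) (fun j => y j.1)) →
      ((∑ i, S2 ρ {i}) - S2 ρ Finset.univ = 0 ↔ {i | p i ≠ 1}.Subsingleton) := by
    intro hp
    rw [← aux_real_iff p h0 h1]
    have : (ρ * ρ).trace.re = ∏ i, p i := by
      have e : (ρ * ρ).trace = ((∏ i, p i : ℝ) : ℂ) := by
        rw [aux_prod_multi hp]
        push_cast
        exact Finset.prod_congr rfl fun i _ => (aux_herm_real (hD i).1.isHermitian).symm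
      rw [e, Complex.ofReal_re]
    simp only [S2, aux_univ_purity, this]
    exact sub_eq_zero
  rw [hset]
  constructor
  · intro he
    have hp : ∀ x y : ∀ i, d i,
        ρ x y = ∏ i, pTr ρ {i} (fun j => x j.1) (fun j => y j.1) := by
      intro x y
      rw [← (aux_chain h Finset.univ).2 he x y, aux_univ]
    exact ⟨hp, (hpur hp).1 he⟩
  · rintro ⟨hp, hs⟩
    exact (hpur hp).2 hs

end auxmulti

/-- For every density operator `ρ^{AB}`, `1 + Tr((ρ^{AB})²) =
Tr((ρ^A)²) + Tr((ρ^B)²)` iff `ρ^{AB} = ρ^A ⊗ ρ^B` with `min(rank ρ^A, rank ρ^B) = 1`.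
Consequently `I_2(A_1:⋯:A_n) = 0` iff `ρ^{A_1⋯A_n}` is a product state with at most one
reduced state `ρ^{A_i}` of rank greater than 1. -/
theorem purity_saturation_iff_product_with_pure_factor :
    (∀ (A B : Type) [Fintype A] [DecidableEq A] [Fintype B] [DecidableEq B]
        (ρ : Matrix (A × B) (A × B) ℂ), IsDensity ρ →
      (1 + (Matrix.trace (ρ * ρ)).re
          = (Matrix.trace (ptA ρ * ptA ρ)).re + (Matrix.trace (ptB ρ * ptB ρ)).re
        ↔ ((∀ p q : A × B, ρ p q = ptA ρ p.1 q.1 * ptB ρ p.2 q.2)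
            ∧ min (ptA ρ).rank (ptB ρ).rank = 1)))
    ∧ (∀ (ι : Type) [Fintype ι] [DecidableEq ι] (d : ι → Type)
        [∀ i, Fintype (d i)] [∀ i, DecidableEq (d i)]
        (ρ : Matrix (∀ i, d i) (∀ i, d i) ℂ), IsDensity ρ →
      ((∑ i, S2 ρ {i}) - S2 ρ Finset.univ = 0
        ↔ ((∀ x y : ∀ i, d i,
              ρ x y = ∏ i, pTr ρ {i} (fun j => x j.1) (fun j => y j.1))
            ∧ {i : ι | 1 < (pTr ρ {i}).rank}.Subsingleton))) := by
  exact ⟨fun A B _ _ _ _ ρ h => aux_part1 h, fun ι _ _ d _ _ ρ h => aux_part2 h⟩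

end Stmt13
end

section
/- For q > 1 and 0 < p < 1, the three-qubit density operator ρ = p|000⟩⟨000| + (1−p)|111⟩⟨111| satisfies the Tsallis strong-subadditivity saturation S_q(AB) + S_q(BC) = S_q(ABC) + S_q(B), but S_q(AC) < S_q(A) + S_q(C); hence saturation of S_q(AB) + S_q(BC) = S_q(ABC) + S_q(B) does not imply I_q(A:C) = 0. -/
open scoped BigOperators ComplexOrder
open Matrix

/-- The three-qubit state `ρ = p|000⟩⟨000| + (1-p)|111⟩⟨111|`. -/
noncomputable def rho17 (p : ℝ) : Matrix (∀ _ : Fin 3, Fin 2) (∀ _ : Fin 3, Fin 2) ℂ :=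
  fun a b =>
    (if a = (fun _ => 0) ∧ b = (fun _ => 0) then ((p : ℂ)) else 0)
      + (if a = (fun _ => 1) ∧ b = (fun _ => 1) then ((1 - p : ℝ) : ℂ) else 0)

lemma aux_sum_eig {n : Type} [Fintype n] [DecidableEq n] (f : n → ℝ) (g : ℝ → ℝ)
    (A : Matrix n n ℂ) (hA : A = Matrix.diagonal (fun i => (f i : ℂ))) (h : A.IsHermitian) :
    ∑ i, g (h.eigenvalues i) = ∑ i, g (f i) := by
  have h1 := h.roots_charpoly_eq_eigenvalues
  have h2 : A.charpoly.roots = Multiset.map (fun i => (f i : ℂ)) Finset.univ.val := by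
    rw [hA, Matrix.charpoly_diagonal, Polynomial.roots_prod _ _ (by
      simp [Finset.prod_ne_zero_iff, Polynomial.X_sub_C_ne_zero])]
    simp
  rw [h2] at h1
  have h3 := congrArg (fun m => (Multiset.map (fun z : ℂ => g z.re) m).sum) h1
  simp only [Multiset.map_map] at h3
  exact h3.symm

lemma aux_combine (s : Finset (Fin 3)) (c : Fin 2) (x : (i : {j // j ∈ s}) → Fin 2)
    (z : (i : {j // j ∉ s}) → Fin 2) :
    combine (d := fun _ : Fin 3 => Fin 2) s x z = (fun _ => c)
      ↔ x = (fun _ => c) ∧ z = (fun _ => c) := by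
  constructor
  · intro h
    refine ⟨?_, ?_⟩
    · funext i
      have := congrFun h i.1
      simpa [combine, i.2] using this
    · funext i
      have := congrFun h i.1
      simpa [combine, i.2] using this
  · rintro ⟨rfl, rfl⟩
    funext i
    simp [combine]

lemma aux_pTr (p : ℝ) (s : Finset (Fin 3)) (hs : s.Nonempty) :
    pTr (rho17 p) s = Matrix.diagonal (fun x => (((if x = (fun _ => 0) then p else 0)
      + (if x = (fun _ => 1) then 1 - p else 0) : ℝ) : ℂ)) := by
  have key : ∀ (c : Fin 2) (r : ℂ) (x y : (i : {j // j ∈ s}) → Fin 2),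
      (∑ z : (i : {j // j ∉ s}) → Fin 2,
        if combine (d := fun _ : Fin 3 => Fin 2) s x z = (fun _ => c)
          ∧ combine (d := fun _ : Fin 3 => Fin 2) s y z = (fun _ => c) then r else 0)
      = if x = (fun _ => c) ∧ y = (fun _ => c) then r else 0 := by
    intro c r x y
    simp only [aux_combine]
    by_cases hx : x = fun _ => c
    · by_cases hy : y = fun _ => c
      · simp [hx, hy]
      · simp [hy]
    · simp [hx]
  ext x y
  simp only [pTr, rho17, Finset.sum_add_distrib]
  rw [key, key]
  by_cases hxy : x = y
  · subst hxy
    simp only [and_self, Matrix.diagonal_apply_eq]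
    push_cast
    split_ifs <;> simp
  · rw [Matrix.diagonal_apply_ne _ hxy, if_neg, if_neg, add_zero]
    · rintro ⟨h, h'⟩; exact hxy (h.trans h'.symm)
    · rintro ⟨h, h'⟩; exact hxy (h.trans h'.symm)

lemma aux_Sq (q p : ℝ) (hq : 1 < q) (s : Finset (Fin 3)) (hs : s.Nonempty) :
    Sq q (rho17 p) s = (1 - (p ^ q + (1 - p) ^ q)) / (q - 1) := by
  have hd := aux_pTr p s hs
  have hH : (pTr (rho17 p) s).IsHermitian := by
    rw [hd]
    refine Matrix.isHermitian_diagonal_of_self_adjoint _ ?_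
    funext x
    simp only [Pi.star_apply]
    exact Complex.conj_ofReal _
  have hsum := aux_sum_eig _ (fun t => t ^ q) _ hd hH
  simp only [Sq, tsallisEntropy]
  rw [dif_pos hH]
  congr 2
  refine hsum.trans ?_
  have hq0 : q ≠ 0 := by linarith
  have h01 : (fun _ => 0 : (i : {j // j ∈ s}) → Fin 2) ≠ (fun _ => 1) := by
    obtain ⟨i, hi⟩ := hs
    intro h
    have := congrFun h ⟨i, hi⟩
    simp at this
  have : ∀ x : (i : {j // j ∈ s}) → Fin 2,
      ((if x = (fun _ => 0) then p else 0) + (if x = (fun _ => 1) then 1 - p else 0) : ℝ) ^ q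
      = (if x = (fun _ => 0) then p ^ q else 0)
        + (if x = (fun _ => 1) then (1 - p) ^ q else 0) := by
    intro x
    by_cases h0 : x = (fun _ => 0)
    · have h1 : ¬ x = (fun _ => 1) := fun h => h01 (h0.symm.trans h)
      simp only [if_pos h0, if_neg h1, add_zero]
    · by_cases h1 : x = (fun _ => 1)
      · simp only [if_pos h1, if_neg h0, zero_add]
      · simp only [if_neg h1, if_neg h0, add_zero, Real.zero_rpow hq0]
  rw [Finset.sum_congr rfl (fun x _ => this x), Finset.sum_add_distrib]
  simp

/-- For `q > 1` and `0 < p < 1`, the state `ρ = p|000⟩⟨000| + (1-p)|111⟩⟨111|`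
saturates the Tsallis strong subadditivity, `S_q(AB) + S_q(BC) = S_q(ABC) + S_q(B)`, but
`S_q(AC) < S_q(A) + S_q(C)`; hence this saturation does not imply `I_q(A:C) = 0`. -/
theorem tsallis_ssa_saturation_without_vanishing_MI
    (q p : ℝ) (hq : 1 < q) (hp0 : 0 < p) (hp1 : p < 1) :
    Sq q (rho17 p) {0, 1} + Sq q (rho17 p) {1, 2}
        = Sq q (rho17 p) {0, 1, 2} + Sq q (rho17 p) {1}
    ∧ Sq q (rho17 p) {0, 2} < Sq q (rho17 p) {0} + Sq q (rho17 p) {2}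
    ∧ MIq q (rho17 p) {({0} : Finset (Fin 3)), {2}} ≠ 0 := by
  have hpos : 0 < (1 - (p ^ q + (1 - p) ^ q)) / (q - 1) := by
    have h1 : p ^ q < p := by
      simpa using Real.rpow_lt_rpow_of_exponent_gt hp0 hp1 hq
    have h2 : (1 - p) ^ q < 1 - p := by
      simpa using Real.rpow_lt_rpow_of_exponent_gt (sub_pos.2 hp1) (by linarith : 1 - p < 1) hq
    exact div_pos (by linarith) (by linarith)
  have hS := fun s hs => aux_Sq q p hq s hs
  refine ⟨?_, ?_, ?_⟩
  · rw [hS _ (by simp), hS _ (by simp), hS _ (by simp), hS _ (by simp)]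
  · rw [hS _ (by simp), hS _ (by simp), hS _ (by simp)]
    linarith
  · unfold MIq
    rw [Finset.sum_pair (by decide), hS _ (by simp), hS _ (by simp), hS _ (by decide)]
    linarith
end

section
/- The quantum mutual information satisfies the following triangle inequalities: for every density operator on a finite-dimensional tripartite Hilbert space H^A⊗H^B⊗H^C, I(A:BC) ≤ I(B:AC) + I(AB:C); and for every density operator on a finite-dimensional four-partite Hilbert space H^A⊗H^B⊗H^C⊗H^D, I(AB:CD) ≤ I(AC:BD) + I(AD:BC), I(A:B:CD) ≤ I(A:BD:C) + I(AD:B:C), and I'(A:B:CD) ≤ I'(A:BD:C) + I'(AD:B:C). -/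
open scoped BigOperators ComplexOrder
open Matrix

set_option linter.unusedSectionVars false

lemma ssa_scalar (p q : ℝ) (hp : 0 < p) (hq : 0 < q) :
    (∫ s in (0:ℝ)..1, s * ((p - q)^2 / (s * q + (1 - s) * p)))
      = p * Real.log p - p * Real.log q - p + q := by
  have hr : ∀ s ∈ Set.uIcc (0:ℝ) 1, 0 < s * q + (1 - s) * p := by
    intro s hs
    rw [Set.uIcc_of_le zero_le_one] at hs
    rcases hs with ⟨h0, h1⟩
    rcases eq_or_lt_of_le h0 with h | h
    · subst h; simpa using hp
    · have : 0 ≤ (1 - s) * p := mul_nonneg (by linarith) hp.le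
      have := mul_pos h hq
      linarith
  have key : ∀ s ∈ Set.uIcc (0:ℝ) 1,
      HasDerivAt (fun s => (q - p) * s - p * Real.log (s * q + (1 - s) * p))
        (s * ((p - q)^2 / (s * q + (1 - s) * p))) s := by
    intro s hs
    have h := hr s hs
    have h1 : HasDerivAt (fun s : ℝ => s * q + (1 - s) * p) (1 * q + (-1) * p) s :=
      ((hasDerivAt_id s).mul_const q).add (((hasDerivAt_id s).const_sub 1).mul_const p)
    have h2 := ((hasDerivAt_id s).const_mul (q - p)).sub ((h1.log h.ne').const_mul p)
    refine h2.congr_deriv ?_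
    have h' := h.ne'
    generalize hr : s * q + (1 - s) * p = r at h' ⊢
    field_simp
    rw [← hr]
    ring
  rw [intervalIntegral.integral_eq_sub_of_hasDerivAt key]
  · simp; ring
  · apply ContinuousOn.intervalIntegrable
    apply ContinuousOn.mul continuousOn_id
    apply ContinuousOn.div continuousOn_const (by fun_prop)
    intro s hs; exact (hr s hs).ne'

lemma ssa_intble (p q c : ℝ) (hp : 0 < p) (hq : 0 < q) :
    IntervalIntegrable (fun s => c * (s * ((p - q)^2 / (s * q + (1 - s) * p))))
      MeasureTheory.volume 0 1 := by
  apply ContinuousOn.intervalIntegrable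
  apply ContinuousOn.mul continuousOn_const
  apply ContinuousOn.mul continuousOn_id
  apply ContinuousOn.div continuousOn_const (by fun_prop)
  intro s hs
  rw [Set.uIcc_of_le zero_le_one] at hs
  rcases hs with ⟨h0, h1⟩
  have : 0 < s * q + (1 - s) * p := by
    rcases eq_or_lt_of_le h0 with h | h
    · subst h; simpa using hp
    · have : 0 ≤ (1 - s) * p := mul_nonneg (by linarith) hp.le
      have := mul_pos h hq
      linarith
  exact this.ne'

section ssacore
variable {n : Type} [Fintype n] [DecidableEq n]

/-- diagonal with real entries, conjugated -/
noncomputable def dg (U : Matrix n n ℂ) (p : n → ℝ) : Matrix n n ℂ :=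
  U * Matrix.diagonal (fun i => (p i : ℂ)) * Uᴴ

noncomputable def Fs (s : ℝ) (ρ σ X : Matrix n n ℂ) : ℝ :=
  2 * (ρ * X).trace.re - 2 * (σ * X).trace.re - s * (σ * (X * Xᴴ)).trace.re
    - (1 - s) * (ρ * (Xᴴ * X)).trace.re

noncomputable def Gs (s : ℝ) (U V : Matrix n n ℂ) (p q : n → ℝ) : ℝ :=
  ∑ j, ∑ i, Complex.normSq ((Vᴴ * U) j i) * ((p i - q j)^2 / (s * q j + (1 - s) * p i))

lemma Fs_eq (s : ℝ) (U V Y : Matrix n n ℂ) (p q : n → ℝ) (hU : Uᴴ * U = 1) (hV : Vᴴ * V = 1) :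
    Fs s (dg U p) (dg V q) (V * Y * Uᴴ) = ∑ j, ∑ i,
      (2 * (p i - q j) * ((starRingEnd ℂ) ((Vᴴ * U) j i) * Y j i).re
        - (s * q j + (1 - s) * p i) * Complex.normSq (Y j i)) := by
  set W := Vᴴ * U with hW
  have hWH : Uᴴ * V = Wᴴ := by simp [hW]
  have e1 : (dg U p * (V * Y * Uᴴ)).trace
      = (Matrix.diagonal (fun i => (p i : ℂ)) * (Wᴴ * Y)).trace := by
    rw [Matrix.trace_mul_comm, show V * Y * Uᴴ * dg U p
      = V * Y * (Uᴴ * U) * Matrix.diagonal (fun i => (p i : ℂ)) * Uᴴ by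
        simp only [dg, Matrix.mul_assoc], hU, Matrix.trace_mul_comm, Matrix.mul_one,
      ← hWH]
    simp only [Matrix.mul_assoc]
    rw [Matrix.trace_mul_comm]
    simp only [Matrix.mul_assoc]
    rw [Matrix.trace_mul_comm]
    simp only [Matrix.mul_assoc]
    rw [Matrix.trace_mul_comm]
    simp only [Matrix.mul_assoc]
  have e2 : (dg V q * (V * Y * Uᴴ)).trace
      = (Matrix.diagonal (fun i => (q i : ℂ)) * (Y * Wᴴ)).trace := by
    rw [show dg V q * (V * Y * Uᴴ)
      = V * (Matrix.diagonal (fun i => (q i : ℂ)) * (Vᴴ * V) * Y * Uᴴ) by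
        simp only [dg, Matrix.mul_assoc], hV, Matrix.trace_mul_comm, Matrix.mul_one, ← hWH]
    simp only [Matrix.mul_assoc]
  have e3 : (dg V q * ((V * Y * Uᴴ) * (V * Y * Uᴴ)ᴴ)).trace
      = (Matrix.diagonal (fun i => (q i : ℂ)) * (Y * Yᴴ)).trace := by
    rw [show dg V q * ((V * Y * Uᴴ) * (V * Y * Uᴴ)ᴴ)
      = V * (Matrix.diagonal (fun i => (q i : ℂ)) * (Vᴴ * V) * Y * (Uᴴ * U) * Yᴴ * Vᴴ) by
        simp only [dg, Matrix.mul_assoc, Matrix.conjTranspose_mul,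
          Matrix.conjTranspose_conjTranspose], hV, hU, Matrix.trace_mul_comm]
    simp only [Matrix.mul_assoc, hV, Matrix.mul_one]
  have e4 : (dg U p * ((V * Y * Uᴴ)ᴴ * (V * Y * Uᴴ))).trace
      = (Matrix.diagonal (fun i => (p i : ℂ)) * (Yᴴ * Y)).trace := by
    rw [show dg U p * ((V * Y * Uᴴ)ᴴ * (V * Y * Uᴴ))
      = U * (Matrix.diagonal (fun i => (p i : ℂ)) * (Uᴴ * U) * Yᴴ * (Vᴴ * V) * Y * Uᴴ) by
        simp only [dg, Matrix.mul_assoc, Matrix.conjTranspose_mul,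
          Matrix.conjTranspose_conjTranspose], hV, hU, Matrix.trace_mul_comm]
    simp only [Matrix.mul_assoc, hU, Matrix.mul_one]
  have f1 : (Matrix.diagonal (fun i => (p i : ℂ)) * (Wᴴ * Y)).trace.re
      = ∑ j, ∑ i, p i * ((starRingEnd ℂ) (W j i) * Y j i).re := by
    rw [Finset.sum_comm]
    simp only [Matrix.trace, Matrix.diag_apply, Matrix.diagonal_mul]
    simp [Matrix.mul_apply, Finset.mul_sum]
  have f2 : (Matrix.diagonal (fun i => (q i : ℂ)) * (Y * Wᴴ)).trace.re
      = ∑ j, ∑ i, q j * ((starRingEnd ℂ) (W j i) * Y j i).re := by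
    simp only [Matrix.trace, Matrix.diag_apply, Matrix.diagonal_mul]
    simp [Matrix.mul_apply, Finset.mul_sum]
    refine Finset.sum_congr rfl fun j _ => Finset.sum_congr rfl fun i _ => ?_
    ring
  have f3 : (Matrix.diagonal (fun i => (q i : ℂ)) * (Y * Yᴴ)).trace.re
      = ∑ j, ∑ i, q j * Complex.normSq (Y j i) := by
    simp only [Matrix.trace, Matrix.diag_apply, Matrix.diagonal_mul]
    simp [Matrix.mul_apply, Finset.mul_sum,
      Complex.normSq_apply]
  have f4 : (Matrix.diagonal (fun i => (p i : ℂ)) * (Yᴴ * Y)).trace.re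
      = ∑ j, ∑ i, p i * Complex.normSq (Y j i) := by
    rw [Finset.sum_comm]
    simp only [Matrix.trace, Matrix.diag_apply, Matrix.diagonal_mul]
    simp [Matrix.mul_apply, Finset.mul_sum,
      Complex.normSq_apply]
  rw [Fs, e1, e2, e3, e4, f1, f2, f3, f4]
  simp only [Finset.mul_sum, ← Finset.sum_sub_distrib]
  refine Finset.sum_congr rfl fun j _ => Finset.sum_congr rfl fun i _ => ?_
  ring

lemma Fs_le (s : ℝ) (hs : 0 ≤ s) (hs1 : s ≤ 1) (U V X : Matrix n n ℂ) (p q : n → ℝ)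
    (hU : Uᴴ * U = 1) (hV : Vᴴ * V = 1) (hp : ∀ i, 0 < p i) (hq : ∀ i, 0 < q i) :
    Fs s (dg U p) (dg V q) X ≤ Gs s U V p q := by
  have hX : X = V * (Vᴴ * X * U) * Uᴴ := by
    have hU' : U * Uᴴ = 1 := mul_eq_one_comm.mp hU
    have hV' : V * Vᴴ = 1 := mul_eq_one_comm.mp hV
    rw [show V * (Vᴴ * X * U) * Uᴴ = (V * Vᴴ) * X * (U * Uᴴ) by simp only [Matrix.mul_assoc],
      hU', hV']; simp
  rw [hX, Fs_eq s U V _ p q hU hV, Gs]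
  refine Finset.sum_le_sum fun j _ => Finset.sum_le_sum fun i _ => ?_
  have hr : 0 < s * q j + (1 - s) * p i := by
    rcases eq_or_lt_of_le hs with h | h
    · subst h; simpa using hp i
    · have : 0 ≤ (1 - s) * p i := mul_nonneg (by linarith) (hp i).le
      have := mul_pos h (hq j)
      linarith
  set r := s * q j + (1 - s) * p i
  generalize (Vᴴ * U) j i = w
  generalize (Vᴴ * X * U) j i = y
  rw [← mul_div_assoc, le_div_iff₀ hr]
  simp only [Complex.normSq_apply, Complex.mul_re, Complex.conj_re, Complex.conj_im]
  nlinarith [sq_nonneg ((p i - q j) * w.re - r * y.re), sq_nonneg ((p i - q j) * w.im - r * y.im)]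

lemma Fs_attain (s : ℝ) (hs : 0 ≤ s) (hs1 : s ≤ 1) (U V : Matrix n n ℂ) (p q : n → ℝ)
    (hU : Uᴴ * U = 1) (hV : Vᴴ * V = 1) (hp : ∀ i, 0 < p i) (hq : ∀ i, 0 < q i) :
    ∃ X, Fs s (dg U p) (dg V q) X = Gs s U V p q := by
  refine ⟨V * (Matrix.of fun j i => (((p i - q j) / (s * q j + (1 - s) * p i) : ℝ) : ℂ) *
    (Vᴴ * U) j i) * Uᴴ, ?_⟩
  rw [Fs_eq s U V _ p q hU hV, Gs]
  refine Finset.sum_congr rfl fun j _ => Finset.sum_congr rfl fun i _ => ?_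
  have hr : 0 < s * q j + (1 - s) * p i := by
    rcases eq_or_lt_of_le hs with h | h
    · subst h; simpa using hp i
    · have : 0 ≤ (1 - s) * p i := mul_nonneg (by linarith) (hp i).le
      have := mul_pos h (hq j)
      linarith
  simp only [Matrix.of_apply]
  set r := s * q j + (1 - s) * p i
  generalize (Vᴴ * U) j i = w
  rw [Complex.normSq_mul, Complex.normSq_ofReal]
  simp only [Complex.normSq_apply, Complex.mul_re, Complex.conj_re, Complex.conj_im,
    Complex.mul_im, Complex.ofReal_re, Complex.ofReal_im]
  field_simp
  ring

noncomputable def Ds (U V : Matrix n n ℂ) (p q : n → ℝ) : ℝ :=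
  ∑ j, ∑ i, Complex.normSq ((Vᴴ * U) j i) * (p i * Real.log (p i) - p i * Real.log (q j) - p i + q j)

lemma Ds_eq_int (U V : Matrix n n ℂ) (p q : n → ℝ) (hp : ∀ i, 0 < p i) (hq : ∀ i, 0 < q i) :
    IntervalIntegrable (fun s => s * Gs s U V p q) MeasureTheory.volume 0 1 ∧
    ∫ s in (0:ℝ)..1, s * Gs s U V p q = Ds U V p q := by
  have h : (fun s => s * Gs s U V p q) = fun s => ∑ j, ∑ i, Complex.normSq ((Vᴴ * U) j i) *
      (s * ((p i - q j)^2 / (s * q j + (1 - s) * p i))) := by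
    funext s
    simp only [Gs, Finset.mul_sum]
    refine Finset.sum_congr rfl fun j _ => Finset.sum_congr rfl fun i _ => ?_
    ring
  rw [h]
  have hI : ∀ j, IntervalIntegrable (fun s => ∑ i, Complex.normSq ((Vᴴ * U) j i) *
      (s * ((p i - q j)^2 / (s * q j + (1 - s) * p i)))) MeasureTheory.volume 0 1 := by
    intro j
    have := IntervalIntegrable.sum (Finset.univ : Finset n)
      (f := fun i s => Complex.normSq ((Vᴴ * U) j i) *
      (s * ((p i - q j)^2 / (s * q j + (1 - s) * p i)))) (a := 0) (b := 1)
      (μ := MeasureTheory.volume) (fun i _ => ssa_intble _ _ _ (hp i) (hq j))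
    refine (congrArg (fun f => IntervalIntegrable f MeasureTheory.volume 0 1) ?_).mp this
    ext s; simp
  constructor
  · have := IntervalIntegrable.sum (Finset.univ : Finset n) (fun j _ => hI j)
    refine (congrArg (fun f => IntervalIntegrable f MeasureTheory.volume 0 1) ?_).mp this
    ext s; simp
  · rw [intervalIntegral.integral_finsetSum (fun j _ => hI j), Ds]
    refine Finset.sum_congr rfl fun j _ => ?_
    rw [intervalIntegral.integral_finsetSum (fun i _ => ssa_intble _ _ _ (hp i) (hq j))]
    refine Finset.sum_congr rfl fun i _ => ?_
    rw [intervalIntegral.integral_const_mul, ssa_scalar _ _ (hp i) (hq j)]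

lemma trace_dg_mul (U V : Matrix n n ℂ) (p f : n → ℝ) :
    (dg U p * dg V f).trace.re = ∑ j, ∑ i, Complex.normSq ((Vᴴ * U) j i) * (p i * f j) := by
  have h : (dg U p * dg V f).trace = ((Vᴴ * U) * Matrix.diagonal (fun i => (p i : ℂ)) *
      ((Vᴴ * U)ᴴ * Matrix.diagonal (fun i => (f i : ℂ)))).trace := by
    rw [show dg U p * dg V f = (U * Matrix.diagonal (fun i => (p i : ℂ)) * Uᴴ * V *
      Matrix.diagonal (fun i => (f i : ℂ))) * Vᴴ by simp only [dg, Matrix.mul_assoc],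
      Matrix.trace_mul_comm]
    simp [Matrix.mul_assoc]
  rw [h]
  generalize Vᴴ * U = W
  rw [Matrix.trace, Complex.re_sum]
  refine Finset.sum_congr rfl fun j _ => ?_
  rw [Matrix.diag_apply, Matrix.mul_apply, Complex.re_sum]
  refine Finset.sum_congr rfl fun i _ => ?_
  rw [Matrix.mul_diagonal, Matrix.mul_diagonal, Matrix.conjTranspose_apply]
  simp [Complex.normSq_apply]
  ring

lemma dg_one (V : Matrix n n ℂ) (hV : Vᴴ * V = 1) : dg V (fun _ => 1) = 1 := by
  have hV' : V * Vᴴ = 1 := mul_eq_one_comm.mp hV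
  simp [dg, hV']

lemma trace_dg (U : Matrix n n ℂ) (p : n → ℝ) (hU : Uᴴ * U = 1) :
    (dg U p).trace.re = ∑ i, p i := by
  rw [dg, Matrix.trace_mul_comm, ← Matrix.mul_assoc, hU]
  simp [Matrix.trace]

lemma dg_mul (U : Matrix n n ℂ) (p f : n → ℝ) (hU : Uᴴ * U = 1) :
    dg U p * dg U f = dg U (fun i => p i * f i) := by
  rw [show dg U p * dg U f = U * Matrix.diagonal (fun i => (p i : ℂ)) * (Uᴴ * U) *
      Matrix.diagonal (fun i => (f i : ℂ)) * Uᴴ by simp only [dg, Matrix.mul_assoc], hU]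
  simp [dg, Matrix.mul_assoc]

lemma Ds_eq (U V : Matrix n n ℂ) (p q : n → ℝ) (hU : Uᴴ * U = 1) (hV : Vᴴ * V = 1) :
    Ds U V p q = (∑ i, p i * Real.log (p i)) - (dg U p * dg V (fun j => Real.log (q j))).trace.re
      - (dg U p).trace.re + (dg V q).trace.re := by
  have h1 : ∑ i, p i * Real.log (p i)
      = ∑ j, ∑ i, Complex.normSq ((Vᴴ * U) j i) * ((p i * Real.log (p i)) * 1) := by
    rw [← trace_dg_mul, dg_one V hV, Matrix.mul_one, trace_dg U _ hU]
  have h2 : (dg U p).trace.re = ∑ j, ∑ i, Complex.normSq ((Vᴴ * U) j i) * (p i * 1) := by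
    rw [← trace_dg_mul, dg_one V hV, Matrix.mul_one]
  have h3 : (dg V q).trace.re = ∑ j, ∑ i, Complex.normSq ((Vᴴ * U) j i) * (1 * q j) := by
    rw [← trace_dg_mul U V (fun _ => 1) q, dg_one U hU, Matrix.one_mul]
  rw [h1, h2, h3, trace_dg_mul, Ds]
  simp only [← Finset.sum_sub_distrib, ← Finset.sum_add_distrib]
  refine Finset.sum_congr rfl fun j _ => Finset.sum_congr rfl fun i _ => ?_
  ring

/-- Monotonicity of relative entropy under the dual of a unital star-embedding. -/
theorem relent_mono {m : Type} [Fintype m] [DecidableEq m]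
    (U V : Matrix n n ℂ) (p q : n → ℝ) (hU : Uᴴ * U = 1) (hV : Vᴴ * V = 1)
    (hp : ∀ i, 0 < p i) (hq : ∀ i, 0 < q i)
    (U' V' : Matrix m m ℂ) (p' q' : m → ℝ) (hU' : U'ᴴ * U' = 1) (hV' : V'ᴴ * V' = 1)
    (hp' : ∀ i, 0 < p' i) (hq' : ∀ i, 0 < q' i)
    (J : Matrix m m ℂ → Matrix n n ℂ) (J1 : J 1 = 1) (Jmul : ∀ X Y, J (X * Y) = J X * J Y)
    (Jstar : ∀ X, J (Xᴴ) = (J X)ᴴ)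
    (hρ : ∀ X, (dg U p * J X).trace = (dg U' p' * X).trace)
    (hσ : ∀ X, (dg V q * J X).trace = (dg V' q' * X).trace) :
    (∑ i, p' i * Real.log (p' i)) - (dg U' p' * dg V' (fun j => Real.log (q' j))).trace.re
      ≤ (∑ i, p i * Real.log (p i)) - (dg U p * dg V (fun j => Real.log (q j))).trace.re := by
  have hD : Ds U' V' p' q' ≤ Ds U V p q := by
    rw [← (Ds_eq_int U' V' p' q' hp' hq').2, ← (Ds_eq_int U V p q hp hq).2]
    refine intervalIntegral.integral_mono_on zero_le_one (Ds_eq_int U' V' p' q' hp' hq').1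
      (Ds_eq_int U V p q hp hq).1 ?_
    rintro s ⟨hs0, hs1⟩
    obtain ⟨X, hX⟩ := Fs_attain s hs0 hs1 U' V' p' q' hU' hV' hp' hq'
    refine mul_le_mul_of_nonneg_left ?_ hs0
    rw [← hX]
    refine le_trans (le_of_eq ?_) (Fs_le s hs0 hs1 U V (J X) p q hU hV hp hq)
    simp only [Fs]
    rw [← Jstar, ← Jmul, ← Jmul, hρ, hρ, hσ, hσ]
  rw [Ds_eq _ _ _ _ hU' hV', Ds_eq _ _ _ _ hU hV] at hD
  have a := hρ 1
  have b := hσ 1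
  rw [J1, Matrix.mul_one, Matrix.mul_one] at a b
  rw [a, b] at hD
  linarith

end ssacore

section ssamid
open Kronecker

lemma vnEntropy_dg {n : Type} [Fintype n] [DecidableEq n] (U : Matrix n n ℂ) (p : n → ℝ)
    (hU : Uᴴ * U = 1) : vnEntropy (dg U p) = ∑ i, negxlog2 (p i) := by
  have hH : (dg U p).IsHermitian := by
    unfold Matrix.IsHermitian dg
    rw [Matrix.conjTranspose_mul, Matrix.conjTranspose_mul, Matrix.conjTranspose_conjTranspose,
      Matrix.diagonal_conjTranspose, Matrix.mul_assoc]
    congr 3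
    ext i; simp
  have hc : (dg U p).charpoly = ∏ i, (Polynomial.X - Polynomial.C (p i : ℂ)) := by
    rw [dg, Matrix.charpoly_mul_comm, ← Matrix.mul_assoc, hU, Matrix.one_mul,
      Matrix.charpoly_diagonal]
  have hr : (dg U p).charpoly.roots = Multiset.map (fun i => (p i : ℂ)) Finset.univ.val := by
    rw [hc, Polynomial.roots_prod]
    · simp
    · simp [Finset.prod_ne_zero_iff, Polynomial.X_sub_C_ne_zero]
  have h2 := hH.roots_charpoly_eq_eigenvalues
  rw [hr] at h2
  rw [vnEntropy, dif_pos hH]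
  have h3 := congrArg (fun m => (Multiset.map (fun z : ℂ => negxlog2 z.re) m).sum) h2
  simp only [Multiset.map_map, Function.comp_def] at h3
  simpa using h3.symm

lemma exists_dg {n : Type} [Fintype n] [DecidableEq n] (M : Matrix n n ℂ) (hM : M.PosSemidef) :
    ∃ (U : Matrix n n ℂ) (p : n → ℝ), Uᴴ * U = 1 ∧ (∀ i, 0 ≤ p i) ∧ M = dg U p := by
  refine ⟨hM.1.eigenvectorUnitary, hM.1.eigenvalues, ?_, hM.eigenvalues_nonneg, ?_⟩
  · exact Unitary.coe_star_mul_self hM.1.eigenvectorUnitary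
  · exact hM.1.spectral_theorem

lemma dg_add {n : Type} [Fintype n] [DecidableEq n] (U : Matrix n n ℂ) (p : n → ℝ)
    (hU : Uᴴ * U = 1) (c : ℝ) : dg U (fun i => p i + c) = dg U p + (c : ℂ) • 1 := by
  have hU' : U * Uᴴ = 1 := mul_eq_one_comm.mp hU
  have : Matrix.diagonal (fun i => ((p i + c : ℝ) : ℂ))
      = Matrix.diagonal (fun i => (p i : ℂ)) + (c : ℂ) • (1 : Matrix n n ℂ) := by
    ext i j
    by_cases h : i = j
    · subst h; simp
    · simp [h]
  simp only [dg]
  rw [this, Matrix.mul_add, Matrix.add_mul]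
  simp [hU']

lemma dg_submatrix {n m : Type} [Fintype n] [DecidableEq n] [Fintype m] [DecidableEq m]
    (U : Matrix n n ℂ) (p : n → ℝ) (e : m ≃ n) :
    dg (U.submatrix e e) (fun i => p (e i)) = (dg U p).submatrix e e := by
  have : Matrix.diagonal (fun i => (p (e i) : ℂ))
      = (Matrix.diagonal (fun i => (p i : ℂ))).submatrix e e := by
    rw [Matrix.submatrix_diagonal_equiv]; rfl
  rw [dg, this, Matrix.conjTranspose_submatrix, Matrix.submatrix_mul_equiv,
    Matrix.submatrix_mul_equiv, dg]

lemma un_submatrix {n m : Type} [Fintype n] [DecidableEq n] [Fintype m] [DecidableEq m]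
    (U : Matrix n n ℂ) (e : m ≃ n) (hU : Uᴴ * U = 1) :
    (U.submatrix e e)ᴴ * (U.submatrix e e) = 1 := by
  rw [Matrix.conjTranspose_submatrix, Matrix.submatrix_mul_equiv, hU, Matrix.submatrix_one_equiv]

lemma vnEntropy_submatrix {n m : Type} [Fintype n] [DecidableEq n] [Fintype m] [DecidableEq m]
    (M : Matrix n n ℂ) (hM : M.PosSemidef) (e : m ≃ n) :
    vnEntropy (M.submatrix e e) = vnEntropy M := by
  obtain ⟨U, p, hU, -, rfl⟩ := exists_dg M hM
  rw [← dg_submatrix, vnEntropy_dg _ _ (un_submatrix U e hU), vnEntropy_dg _ _ hU]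
  exact Equiv.sum_comp e (fun i => negxlog2 (p i))

lemma dg_kron {n m : Type} [Fintype n] [DecidableEq n] [Fintype m] [DecidableEq m]
    (U : Matrix n n ℂ) (p : n → ℝ) :
    dg (U ⊗ₖ (1 : Matrix m m ℂ)) (fun x => p x.1) = dg U p ⊗ₖ (1 : Matrix m m ℂ) := by
  have : Matrix.diagonal (fun x : n × m => (p x.1 : ℂ))
      = (Matrix.diagonal (fun i => (p i : ℂ))) ⊗ₖ (1 : Matrix m m ℂ) := by
    rw [← Matrix.diagonal_one, Matrix.diagonal_kronecker_diagonal]; simp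
  rw [dg, this, Matrix.conjTranspose_kronecker, ← Matrix.mul_kronecker_mul,
    ← Matrix.mul_kronecker_mul, dg]
  simp

lemma un_kron {n m : Type} [Fintype n] [DecidableEq n] [Fintype m] [DecidableEq m]
    (U : Matrix n n ℂ) (hU : Uᴴ * U = 1) :
    (U ⊗ₖ (1 : Matrix m m ℂ))ᴴ * (U ⊗ₖ (1 : Matrix m m ℂ)) = 1 := by
  rw [Matrix.conjTranspose_kronecker, ← Matrix.mul_kronecker_mul, hU]
  simp

variable {A B C : Type} [Fintype A] [DecidableEq A] [Fintype B] [DecidableEq B]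
  [Fintype C] [DecidableEq C]

def mAB (R : Matrix (A × B × C) (A × B × C) ℂ) : Matrix (A × B) (A × B) ℂ :=
  Matrix.of fun x y => ∑ c, R (x.1, x.2, c) (y.1, y.2, c)

/-- trace out the first factor -/
def mR (R : Matrix (A × B) (A × B) ℂ) : Matrix B B ℂ :=
  Matrix.of fun x y => ∑ a, R (a, x) (a, y)

lemma tr_mR (R : Matrix (A × B) (A × B) ℂ) (X : Matrix B B ℂ) :
    (R * ((1 : Matrix A A ℂ) ⊗ₖ X)).trace = (mR R * X).trace := by
  simp only [Matrix.trace, Matrix.diag_apply, Matrix.mul_apply, Fintype.sum_prod_type,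
    Matrix.kroneckerMap_apply, Matrix.one_apply, mR, Matrix.of_apply, Finset.sum_mul]
  simp only [ite_mul, one_mul, zero_mul, mul_ite, mul_zero]
  rw [Finset.sum_comm]
  refine Finset.sum_congr rfl fun b _ => ?_
  rw [Finset.sum_comm]
  rw [Finset.sum_comm]
  conv_rhs => rw [Finset.sum_comm]
  refine Finset.sum_congr rfl fun a _ => ?_
  rw [Finset.sum_comm]
  simp

/-- trace out the last factor -/
def mL (R : Matrix (A × B) (A × B) ℂ) : Matrix A A ℂ :=
  Matrix.of fun x y => ∑ b, R (x, b) (y, b)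

lemma tr_mL (R : Matrix (A × B) (A × B) ℂ) (X : Matrix A A ℂ) :
    (R * (X ⊗ₖ (1 : Matrix B B ℂ))).trace = (mL R * X).trace := by
  simp only [Matrix.trace, Matrix.diag_apply, Matrix.mul_apply, Fintype.sum_prod_type,
    Matrix.kroneckerMap_apply, Matrix.one_apply, mL, Matrix.of_apply, Finset.sum_mul]
  simp only [mul_ite, mul_zero, mul_one]
  refine Finset.sum_congr rfl fun a _ => ?_
  rw [Finset.sum_comm]
  refine Finset.sum_congr rfl fun a' _ => ?_
  simp

lemma mAB_eq (R : Matrix (A × B × C) (A × B × C) ℂ) :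
    mAB R = mL (R.submatrix (Equiv.prodAssoc A B C) (Equiv.prodAssoc A B C)) := rfl

lemma tr_mAB (R : Matrix (A × B × C) (A × B × C) ℂ) (X : Matrix (A × B) (A × B) ℂ) :
    (R * ((X ⊗ₖ (1 : Matrix C C ℂ)).submatrix (Equiv.prodAssoc A B C).symm
      (Equiv.prodAssoc A B C).symm)).trace = (mAB R * X).trace := by
  have h : ∀ M : Matrix (A × B × C) (A × B × C) ℂ, M.trace
      = (M.submatrix (Equiv.prodAssoc A B C) (Equiv.prodAssoc A B C)).trace := by
    intro M
    exact (Equiv.sum_comp (Equiv.prodAssoc A B C) (fun i => M i i)).symm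
  rw [mAB_eq, ← tr_mL, h, ← Matrix.submatrix_mul_equiv _ _ _ (Equiv.prodAssoc A B C)]
  simp

lemma mL_mR (R : Matrix (A × B × C) (A × B × C) ℂ) : mL (mR R) = mR (mAB R) := by
  ext b b'
  simp only [mL, mR, mAB, Matrix.of_apply]
  rw [Finset.sum_comm]

lemma mR_sub (M : Matrix (A × B) (A × B) ℂ) :
    mR ((M ⊗ₖ (1 : Matrix C C ℂ)).submatrix (Equiv.prodAssoc A B C).symm
      (Equiv.prodAssoc A B C).symm) = mR M ⊗ₖ (1 : Matrix C C ℂ) := by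
  ext x y
  simp [mR, Matrix.kroneckerMap_apply, Finset.sum_mul]

theorem ssa_pd (R : Matrix (A × B × C) (A × B × C) ℂ)
    (U : Matrix (A × B × C) (A × B × C) ℂ) (p : A × B × C → ℝ) (hU : Uᴴ * U = 1)
    (hp : ∀ i, 0 < p i) (hR : R = dg U p)
    (U1 : Matrix (A × B) (A × B) ℂ) (p1 : A × B → ℝ) (hU1 : U1ᴴ * U1 = 1)
    (hp1 : ∀ i, 0 < p1 i) (hR1 : mAB R = dg U1 p1)
    (U2 : Matrix (B × C) (B × C) ℂ) (p2 : B × C → ℝ) (hU2 : U2ᴴ * U2 = 1)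
    (hp2 : ∀ i, 0 < p2 i) (hR2 : mR R = dg U2 p2)
    (U3 : Matrix B B ℂ) (p3 : B → ℝ) (hU3 : U3ᴴ * U3 = 1)
    (hp3 : ∀ i, 0 < p3 i) (hR3 : mR (mAB R) = dg U3 p3) :
    (∑ i, p2 i * Real.log (p2 i)) - (∑ i, p3 i * Real.log (p3 i))
      ≤ (∑ i, p i * Real.log (p i)) - (∑ i, p1 i * Real.log (p1 i)) := by
  let e := (Equiv.prodAssoc A B C).symm
  have hV : ∀ f : A × B → ℝ, dg ((U1 ⊗ₖ (1 : Matrix C C ℂ)).submatrix e e) (fun x => f (e x).1)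
      = (dg U1 f ⊗ₖ (1 : Matrix C C ℂ)).submatrix e e := by
    intro f
    rw [← dg_kron, ← dg_submatrix]
  have key := relent_mono U ((U1 ⊗ₖ (1 : Matrix C C ℂ)).submatrix e e) p (fun x => p1 (e x).1) hU
    (un_submatrix _ e (un_kron U1 hU1)) hp (fun _ => hp1 _)
    U2 (U3 ⊗ₖ (1 : Matrix C C ℂ)) p2 (fun x => p3 x.1) hU2 (un_kron U3 hU3) hp2 (fun _ => hp3 _)
    (fun X => (1 : Matrix A A ℂ) ⊗ₖ X) (by simp)
    (by intro X Y; simp only [← Matrix.mul_kronecker_mul, Matrix.one_mul])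
    (by intro X; simp only [Matrix.conjTranspose_kronecker, Matrix.conjTranspose_one])
    (by intro X; rw [tr_mR, ← hR, hR2])
    (by intro X; rw [tr_mR, hV, mR_sub, ← hR1, hR3, dg_kron])
  rw [hV (fun x => Real.log (p1 x)), dg_kron U3 (fun x => Real.log (p3 x)), ← hR, ← hR2,
    tr_mAB, tr_mL, mL_mR, hR3, hR1, dg_mul _ _ _ hU1, dg_mul _ _ _ hU3, trace_dg _ _ hU1,
    trace_dg _ _ hU3] at key
  exact key

lemma mR_psd (R : Matrix (A × B) (A × B) ℂ) (h : R.PosSemidef) : (mR R).PosSemidef := by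
  have : mR R = ∑ a, R.submatrix (fun b => (a, b)) (fun b => (a, b)) := by
    ext x y; simp [mR, Matrix.sum_apply]
  rw [this]
  exact Matrix.posSemidef_sum _ fun a _ => h.submatrix _

lemma mL_psd (R : Matrix (A × B) (A × B) ℂ) (h : R.PosSemidef) : (mL R).PosSemidef := by
  have : mL R = ∑ b, R.submatrix (fun a => (a, b)) (fun a => (a, b)) := by
    ext x y; simp [mL, Matrix.sum_apply]
  rw [this]
  exact Matrix.posSemidef_sum _ fun a _ => h.submatrix _

lemma mR_add (R : Matrix (A × B) (A × B) ℂ) (c : ℝ) :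
    mR (R + (c : ℂ) • 1) = mR R + ((c * Fintype.card A : ℝ) : ℂ) • 1 := by
  ext x y
  by_cases h : x = y
  · subst h; simp [mR, Finset.sum_add_distrib, mul_comm]
  · simp [mR, Finset.sum_add_distrib, Matrix.one_apply, h]

lemma mAB_add (R : Matrix (A × B × C) (A × B × C) ℂ) (c : ℝ) :
    mAB (R + (c : ℂ) • 1) = mAB R + ((c * Fintype.card C : ℝ) : ℂ) • 1 := by
  ext x y
  by_cases h : x = y
  · subst h; simp [mAB, Finset.sum_add_distrib, mul_comm]
  · simp [mAB, Finset.sum_add_distrib, Matrix.one_apply, h]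
    intro h1 h2
    exact absurd (Prod.ext h1 h2) h

theorem ssa_psd [Nonempty A] [Nonempty C] (R : Matrix (A × B × C) (A × B × C) ℂ)
    (hR : R.PosSemidef) :
    vnEntropy R + vnEntropy (mR (mAB R)) ≤ vnEntropy (mAB R) + vnEntropy (mR R) := by
  have hR1 : (mAB R).PosSemidef := by rw [mAB_eq]; exact mL_psd _ (hR.submatrix _)
  obtain ⟨U, p, hU, hp, e0⟩ := exists_dg R hR
  obtain ⟨U1, p1, hU1, hp1, e1⟩ := exists_dg _ hR1
  obtain ⟨U2, p2, hU2, hp2, e2⟩ := exists_dg _ (mR_psd _ hR)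
  obtain ⟨U3, p3, hU3, hp3, e3⟩ := exists_dg _ (mR_psd _ hR1)
  have hA : (0 : ℝ) < Fintype.card A := by exact_mod_cast Fintype.card_pos
  have hC : (0 : ℝ) < Fintype.card C := by exact_mod_cast Fintype.card_pos
  set α : ℝ := (Fintype.card A : ℝ) with hα
  set γ : ℝ := (Fintype.card C : ℝ) with hγ
  let η : ℝ → ℝ := fun x => x * Real.log x
  have hη : Continuous η := Real.continuous_mul_log
  have key : ∀ ε > (0:ℝ), (∑ i, η (p2 i + ε * α)) - (∑ i, η (p3 i + ε * γ * α))
      ≤ (∑ i, η (p i + ε)) - (∑ i, η (p1 i + ε * γ)) := by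
    intro ε hε
    have h1 := mAB_add R ε
    have h2 := mR_add R ε
    have h3 := mR_add (mAB R) (ε * γ)
    refine ssa_pd (R + (ε : ℂ) • 1) U (fun i => p i + ε) hU
      (fun i => by have := hp i; positivity) (by rw [dg_add _ _ hU, e0])
      U1 (fun i => p1 i + ε * γ) hU1 (fun i => by have := hp1 i; positivity)
      (by rw [dg_add _ _ hU1, h1, e1])
      U2 (fun i => p2 i + ε * α) hU2 (fun i => by have := hp2 i; positivity)
      (by rw [dg_add _ _ hU2, h2, e2])
      U3 (fun i => p3 i + ε * γ * α) hU3 (fun i => by have := hp3 i; positivity)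
      (by rw [dg_add _ _ hU3, h1, h3, e3])
  have lim : (∑ i, η (p2 i)) - (∑ i, η (p3 i)) ≤ (∑ i, η (p i)) - (∑ i, η (p1 i)) := by
    have c1 : Continuous fun ε : ℝ => (∑ i, η (p2 i + ε * α)) - (∑ i, η (p3 i + ε * γ * α)) := by
      fun_prop
    have c2 : Continuous fun ε : ℝ => (∑ i, η (p i + ε)) - (∑ i, η (p1 i + ε * γ)) := by
      fun_prop
    have t1 := (c1.tendsto 0).mono_left (nhdsWithin_le_nhds (s := Set.Ioi 0))
    have t2 := (c2.tendsto 0).mono_left (nhdsWithin_le_nhds (s := Set.Ioi 0))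
    have := le_of_tendsto_of_tendsto t1 t2
      (by filter_upwards [self_mem_nhdsWithin] with ε hε using key ε hε)
    simpa using this
  have hneg : ∀ x, negxlog2 x = -(η x) / Real.log 2 := by
    intro x; simp only [negxlog2, η, Real.logb]; ring
  have hl : 0 < Real.log 2 := Real.log_pos (by norm_num)
  have s0 : vnEntropy R = -(∑ i, η (p i)) / Real.log 2 := by
    rw [e0, vnEntropy_dg _ _ hU]
    simp only [hneg, ← Finset.sum_div, Finset.sum_neg_distrib]
  have s1 : vnEntropy (mAB R) = -(∑ i, η (p1 i)) / Real.log 2 := by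
    rw [e1, vnEntropy_dg _ _ hU1]
    simp only [hneg, ← Finset.sum_div, Finset.sum_neg_distrib]
  have s2 : vnEntropy (mR R) = -(∑ i, η (p2 i)) / Real.log 2 := by
    rw [e2, vnEntropy_dg _ _ hU2]
    simp only [hneg, ← Finset.sum_div, Finset.sum_neg_distrib]
  have s3 : vnEntropy (mR (mAB R)) = -(∑ i, η (p3 i)) / Real.log 2 := by
    rw [e3, vnEntropy_dg _ _ hU3]
    simp only [hneg, ← Finset.sum_div, Finset.sum_neg_distrib]
  rw [s0, s1, s2, s3, ← add_div, ← add_div]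
  apply div_le_div_of_nonneg_right _ hl.le
  linarith

end ssamid

section ssafin
variable {ι : Type} [Fintype ι] [DecidableEq ι] {d : ι → Type}
  [∀ i, Fintype (d i)] [∀ i, DecidableEq (d i)]

lemma pTr_psd (ρ : Matrix (∀ i, d i) (∀ i, d i) ℂ) (h : ρ.PosSemidef) (s : Finset ι) :
    (pTr ρ s).PosSemidef := by
  have : pTr ρ s = ∑ z : (i : {j // j ∉ s}) → d i.1,
      ρ.submatrix (fun x => combine s x z) (fun x => combine s x z) := by
    ext x y; simp [pTr, Matrix.sum_apply]
  rw [this]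
  exact Matrix.posSemidef_sum _ fun a _ => h.submatrix _

lemma pTr_trans (ρ : Matrix (∀ i, d i) (∀ i, d i) ℂ) {s u : Finset ι} (hsu : s ⊆ u)
    (P : ι → Prop) [DecidablePred P] (hP : ∀ j, P j ↔ j ∈ u ∧ j ∉ s)
    (x y : (i : {j // j ∈ s}) → d i.1)
    (gx gy : ((i : {j // P j}) → d i.1) → ((i : {j // j ∈ u}) → d i.1))
    (hx1 : ∀ w i (h : i ∈ s) (hu : i ∈ u), gx w ⟨i, hu⟩ = x ⟨i, h⟩)
    (hx2 : ∀ w i (h : P i) (hu : i ∈ u), gx w ⟨i, hu⟩ = w ⟨i, h⟩)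
    (hy1 : ∀ w i (h : i ∈ s) (hu : i ∈ u), gy w ⟨i, hu⟩ = y ⟨i, h⟩)
    (hy2 : ∀ w i (h : P i) (hu : i ∈ u), gy w ⟨i, hu⟩ = w ⟨i, h⟩) :
    ∑ w, pTr ρ u (gx w) (gy w) = pTr ρ s x y := by
  simp only [pTr]
  rw [← Fintype.sum_prod_type']
  let e : (((i : {j // P j}) → d i.1) × ((i : {j // j ∉ u}) → d i.1)) ≃
      ((i : {j // j ∉ s}) → d i.1) :=
    { toFun := fun wz i => if h : i.1 ∈ u then wz.1 ⟨i.1, (hP _).2 ⟨h, i.2⟩⟩ else wz.2 ⟨i.1, h⟩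
      invFun := fun z => (fun i => z ⟨i.1, ((hP _).1 i.2).2⟩, fun i => z ⟨i.1, fun h => i.2 (hsu h)⟩)
      left_inv := by
        rintro ⟨w, z⟩
        ext i
        · have := ((hP _).1 i.2).1
          simp [this]
        · have := i.2
          simp [this]
      right_inv := by
        intro z
        ext i
        by_cases h : i.1 ∈ u <;> simp [h] }
  refine Fintype.sum_equiv e _ _ ?_
  rintro ⟨w, z⟩
  have aux : ∀ (x : (i : {j // j ∈ s}) → d i.1)
      (gx : ((i : {j // P j}) → d i.1) → ((i : {j // j ∈ u}) → d i.1))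
      (_ : ∀ w i (h : i ∈ s) (hu : i ∈ u), gx w ⟨i, hu⟩ = x ⟨i, h⟩)
      (_ : ∀ w i (h : P i) (hu : i ∈ u), gx w ⟨i, hu⟩ = w ⟨i, h⟩),
      combine u (gx w) z = combine s x (e (w, z)) := by
    intro x gx h1 h2
    funext i
    by_cases hs : i ∈ s
    · have hu := hsu hs
      simp only [combine, hs, hu, dif_pos]
      exact h1 _ _ _ _
    · by_cases hu : i ∈ u
      · simp only [combine, hs, hu, dif_pos, dif_neg, not_false_eq_true, e, Equiv.coe_fn_mk]
        exact h2 _ _ _ _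
      · simp only [combine, hs, hu, dif_neg, not_false_eq_true, e, Equiv.coe_fn_mk]
  rw [aux x gx hx1 hx2, aux y gy hy1 hy2]

theorem ssa_Sv (ρ : Matrix (∀ i, d i) (∀ i, d i) ℂ) (hρ : IsDensity ρ) (s t : Finset ι) :
    Sv ρ (s ∪ t) + Sv ρ (s ∩ t) ≤ Sv ρ s + Sv ρ t := by
  have hne : Nonempty (∀ i, d i) := by
    by_contra h
    rw [not_nonempty_iff] at h
    have := hρ.2
    simp [Matrix.trace] at this
  obtain ⟨x0⟩ := hne
  let A := (i : {j // j ∈ s ∧ j ∉ t}) → d i.1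
  let B := (i : {j // j ∈ s ∩ t}) → d i.1
  let C := (i : {j // j ∈ t ∧ j ∉ s}) → d i.1
  let _ : DecidableEq A := inferInstanceAs (DecidableEq ((i : {j // j ∈ s ∧ j ∉ t}) → d i.1))
  let _ : DecidableEq B := inferInstanceAs (DecidableEq ((i : {j // j ∈ s ∩ t}) → d i.1))
  let _ : DecidableEq C := inferInstanceAs (DecidableEq ((i : {j // j ∈ t ∧ j ∉ s}) → d i.1))
  have : Nonempty A := ⟨fun i => x0 i.1⟩
  have : Nonempty C := ⟨fun i => x0 i.1⟩
  let eS : A × B ≃ ((i : {j // j ∈ s}) → d i.1) :=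
    { toFun := fun ab i => if h : i.1 ∈ t then ab.2 ⟨i.1, Finset.mem_inter.2 ⟨i.2, h⟩⟩
        else ab.1 ⟨i.1, i.2, h⟩
      invFun := fun x => (fun i => x ⟨i.1, i.2.1⟩, fun i => x ⟨i.1, (Finset.mem_inter.1 i.2).1⟩)
      left_inv := by
        rintro ⟨a, b⟩
        ext i
        · have := i.2.2
          simp [this]
        · have := (Finset.mem_inter.1 i.2).2
          simp [this]
      right_inv := by
        intro z
        ext i
        by_cases h : i.1 ∈ t <;> simp [h] }
  let eT : B × C ≃ ((i : {j // j ∈ t}) → d i.1) :=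
    { toFun := fun bc i => if h : i.1 ∈ s then bc.1 ⟨i.1, Finset.mem_inter.2 ⟨h, i.2⟩⟩
        else bc.2 ⟨i.1, i.2, h⟩
      invFun := fun x => (fun i => x ⟨i.1, (Finset.mem_inter.1 i.2).2⟩, fun i => x ⟨i.1, i.2.1⟩)
      left_inv := by
        rintro ⟨a, b⟩
        ext i
        · have := (Finset.mem_inter.1 i.2).1
          simp [this]
        · have := i.2.2
          simp [this]
      right_inv := by
        intro z
        ext i
        by_cases h : i.1 ∈ s <;> simp [h] }
  let eU : A × B × C ≃ ((i : {j // j ∈ s ∪ t}) → d i.1) :=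
    { toFun := fun abc i => if h : i.1 ∈ s then eS (abc.1, abc.2.1) ⟨i.1, h⟩
        else abc.2.2 ⟨i.1, (Finset.mem_union.1 i.2).resolve_left h, h⟩
      invFun := fun x => (fun i => x ⟨i.1, Finset.mem_union_left _ i.2.1⟩,
        fun i => x ⟨i.1, Finset.mem_union_left _ (Finset.mem_inter.1 i.2).1⟩,
        fun i => x ⟨i.1, Finset.mem_union_right _ i.2.1⟩)
      left_inv := by
        rintro ⟨a, b, c⟩
        ext i
        · have h1 := i.2.1
          have h2 := i.2.2
          simp [eS, h1, h2]
        · have h1 := (Finset.mem_inter.1 i.2).1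
          have h2 := (Finset.mem_inter.1 i.2).2
          simp [eS, h1, h2]
        · have h2 := i.2.2
          simp [h2]
      right_inv := by
        intro z
        ext i
        by_cases h : i.1 ∈ s
        · by_cases h' : i.1 ∈ t <;> simp [eS, h, h']
        · simp [h] }
  let R : Matrix (A × B × C) (A × B × C) ℂ := (pTr ρ (s ∪ t)).submatrix eU eU
  have hpsd := pTr_psd ρ hρ.1
  have hR : R.PosSemidef := (hpsd _).submatrix _
  have h1 : mAB R = (pTr ρ s).submatrix eS eS := by
    ext x y
    refine pTr_trans ρ (Finset.subset_union_left) (fun j => j ∈ t ∧ j ∉ s) ?_ (eS x) (eS y)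
      (fun c => eU (x.1, x.2, c)) (fun c => eU (y.1, y.2, c)) ?_ ?_ ?_ ?_
    · intro j; simp only [Finset.mem_union]; tauto
    · intro w i h hu; simp [eU, h]
    · intro w i h hu; simp [eU, h.2]
    · intro w i h hu; simp [eU, h]
    · intro w i h hu; simp [eU, h.2]
  have h2 : mR R = (pTr ρ t).submatrix eT eT := by
    ext x y
    refine pTr_trans ρ (Finset.subset_union_right) (fun j => j ∈ s ∧ j ∉ t) ?_ (eT x) (eT y)
      (fun a => eU (a, x)) (fun a => eU (a, y)) ?_ ?_ ?_ ?_
    · intro j; simp only [Finset.mem_union]; tauto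
    · intro w i h hu; by_cases hs : i ∈ s <;> simp [eU, eS, eT, h, hs]
    · intro w i h hu; simp [eU, eS, h.1, h.2]
    · intro w i h hu; by_cases hs : i ∈ s <;> simp [eU, eS, eT, h, hs]
    · intro w i h hu; simp [eU, eS, h.1, h.2]
  have h3 : mR (mAB R) = pTr ρ (s ∩ t) := by
    rw [h1]
    ext x y
    refine pTr_trans ρ (Finset.inter_subset_left) (fun j => j ∈ s ∧ j ∉ t) ?_ x y
      (fun a => eS (a, x)) (fun a => eS (a, y)) ?_ ?_ ?_ ?_
    · intro j; simp only [Finset.mem_inter]; tauto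
    · intro w i h hu
      have := (Finset.mem_inter.1 h).2
      simp [eS, this]
    · intro w i h hu; simp [eS, h.2]
    · intro w i h hu
      have := (Finset.mem_inter.1 h).2
      simp [eS, this]
    · intro w i h hu; simp [eS, h.2]
  have key := ssa_psd R hR
  rw [h3, h1, h2] at key
  rw [vnEntropy_submatrix _ (hpsd _), vnEntropy_submatrix _ (hpsd _),
    vnEntropy_submatrix _ (hpsd _)] at key
  exact key

lemma Sv_empty (ρ : Matrix (∀ i, d i) (∀ i, d i) ℂ) (hρ : IsDensity ρ) :
    Sv ρ ∅ = 0 := by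
  have h : pTr ρ ∅ = dg 1 (fun _ => 1) := by
    rw [dg_one _ (by simp)]
    ext x y
    obtain rfl : x = y := by
      funext i; exact absurd i.2 (Finset.notMem_empty _)
    rw [Matrix.one_apply_eq, ← hρ.2, pTr, Matrix.trace]
    refine Fintype.sum_bijective (combine ∅ x) ⟨?_, ?_⟩ _ _ (fun z => rfl)
    · intro z z' h
      funext i
      simpa [combine] using congrFun h i.1
    · intro w
      exact ⟨fun i => w i.1, by funext i; simp [combine]⟩
  rw [Sv, h, vnEntropy_dg _ _ (by simp)]
  simp [negxlog2]

lemma sa_Sv (ρ : Matrix (∀ i, d i) (∀ i, d i) ℂ) (hρ : IsDensity ρ) (s t : Finset ι)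
    (h : s ∩ t = ∅) : Sv ρ (s ∪ t) ≤ Sv ρ s + Sv ρ t := by
  have := ssa_Sv ρ hρ s t
  rw [h, Sv_empty ρ hρ] at this
  linarith

lemma ssa_Sv' (ρ : Matrix (∀ i, d i) (∀ i, d i) ℂ) (hρ : IsDensity ρ) (s t u b : Finset ι)
    (hu : s ∪ t = u) (hb : s ∩ t = b) : Sv ρ u + Sv ρ b ≤ Sv ρ s + Sv ρ t := by
  subst hu hb; exact ssa_Sv ρ hρ s t

lemma sa_Sv' (ρ : Matrix (∀ i, d i) (∀ i, d i) ℂ) (hρ : IsDensity ρ) (s t u : Finset ι)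
    (hu : s ∪ t = u) (h : s ∩ t = ∅) : Sv ρ u ≤ Sv ρ s + Sv ρ t := by
  subst hu; exact sa_Sv ρ hρ s t h

lemma MI_pair (ρ : Matrix (∀ i, d i) (∀ i, d i) ℂ) (s t u : Finset ι) (h : s ≠ t)
    (hu : s ∪ t = u) : MI ρ {s, t} = Sv ρ s + Sv ρ t - Sv ρ u := by
  subst hu
  rw [MI, Finset.sum_pair h]; simp

lemma MI_triple (ρ : Matrix (∀ i, d i) (∀ i, d i) ℂ) (r s t u : Finset ι) (h1 : r ≠ s)
    (h2 : r ≠ t) (h3 : s ≠ t)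
    (hu : r ∪ (s ∪ t) = u) : MI ρ {r, s, t} = Sv ρ r + Sv ρ s + Sv ρ t - Sv ρ u := by
  subst hu
  rw [MI, Finset.sum_insert (by simp [h1, h2]), Finset.sum_pair h3]; simp; ring

lemma MI'_triple (ρ : Matrix (∀ i, d i) (∀ i, d i) ℂ) (r s t u r' s' t' : Finset ι) (h1 : r ≠ s)
    (h2 : r ≠ t) (h3 : s ≠ t)
    (hu : r ∪ (s ∪ t) = u) (hr : u \ r = r') (hs : u \ s = s') (ht : u \ t = t') :
    MI' ρ {r, s, t} = Sv ρ r' + Sv ρ s' + Sv ρ t' - 2 * Sv ρ u := by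
  have hsup : ({r, s, t} : Finset (Finset ι)).sup id = u := by
    rw [← hu]; simp
  rw [MI', hsup, Finset.sum_insert (by simp [h1, h2]), Finset.sum_pair h3,
    Finset.card_insert_of_notMem (by simp [h1, h2]), Finset.card_pair h3, hr, hs, ht]
  push_cast; ring

end ssafin

/-- Triangle inequalities for the quantum mutual information: for every
density operator on a tripartite space, `I(A:BC) ≤ I(B:AC) + I(AB:C)`; and for every
density operator on a four-partite space, `I(AB:CD) ≤ I(AC:BD) + I(AD:BC)`,
`I(A:B:CD) ≤ I(A:BD:C) + I(AD:B:C)` and `I'(A:B:CD) ≤ I'(A:BD:C) + I'(AD:B:C)`. -/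
theorem mutualInfo_triangle
    {d3 : Fin 3 → Type} [∀ i, Fintype (d3 i)] [∀ i, DecidableEq (d3 i)]
    {d4 : Fin 4 → Type} [∀ i, Fintype (d4 i)] [∀ i, DecidableEq (d4 i)]
    (ρ : Matrix (∀ i, d3 i) (∀ i, d3 i) ℂ) (hρ : IsDensity ρ)
    (σ : Matrix (∀ i, d4 i) (∀ i, d4 i) ℂ) (hσ : IsDensity σ) :
    MI ρ {({0} : Finset (Fin 3)), {1, 2}}
        ≤ MI ρ {({1} : Finset (Fin 3)), {0, 2}} + MI ρ {({0, 1} : Finset (Fin 3)), {2}}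
    ∧ MI σ {({0, 1} : Finset (Fin 4)), {2, 3}}
        ≤ MI σ {({0, 2} : Finset (Fin 4)), {1, 3}}
            + MI σ {({0, 3} : Finset (Fin 4)), {1, 2}}
    ∧ MI σ {({0} : Finset (Fin 4)), {1}, {2, 3}}
        ≤ MI σ {({0} : Finset (Fin 4)), {1, 3}, {2}}
            + MI σ {({0, 3} : Finset (Fin 4)), {1}, {2}}
    ∧ MI' σ {({0} : Finset (Fin 4)), {1}, {2, 3}}
        ≤ MI' σ {({0} : Finset (Fin 4)), {1, 3}, {2}}
            + MI' σ {({0, 3} : Finset (Fin 4)), {1}, {2}} := by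
  refine ⟨?_, ?_, ?_, ?_⟩
  · rw [MI_pair ρ _ _ {0, 1, 2} (by decide) (by decide),
      MI_pair ρ _ _ {0, 1, 2} (by decide) (by decide),
      MI_pair ρ _ _ {0, 1, 2} (by decide) (by decide)]
    have a1 := sa_Sv' ρ hρ {1} {2} {1, 2} (by decide) (by decide)
    have a2 := ssa_Sv' ρ hρ {0, 1} {0, 2} {0, 1, 2} {0} (by decide) (by decide)
    linarith
  · rw [MI_pair σ _ _ {0, 1, 2, 3} (by decide) (by decide),
      MI_pair σ _ _ {0, 1, 2, 3} (by decide) (by decide),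
      MI_pair σ _ _ {0, 1, 2, 3} (by decide) (by decide)]
    have a1 := ssa_Sv' σ hσ {0, 2} {1, 2} {0, 1, 2} {2} (by decide) (by decide)
    have a2 := ssa_Sv' σ hσ {0, 3} {1, 3} {0, 1, 3} {3} (by decide) (by decide)
    have a3 := sa_Sv' σ hσ {2} {3} {2, 3} (by decide) (by decide)
    have a4 := ssa_Sv' σ hσ {0, 1, 2} {0, 1, 3} {0, 1, 2, 3} {0, 1} (by decide) (by decide)
    linarith
  · rw [MI_triple σ _ _ _ {0, 1, 2, 3} (by decide) (by decide) (by decide) (by decide),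
      MI_triple σ _ _ _ {0, 1, 2, 3} (by decide) (by decide) (by decide) (by decide),
      MI_triple σ _ _ _ {0, 1, 2, 3} (by decide) (by decide) (by decide) (by decide)]
    have a1 := ssa_Sv' σ hσ {0, 3} {1, 3} {0, 1, 3} {3} (by decide) (by decide)
    have a2 := sa_Sv' σ hσ {2} {3} {2, 3} (by decide) (by decide)
    have a3 := sa_Sv' σ hσ {0, 1, 3} {2} {0, 1, 2, 3} (by decide) (by decide)
    linarith
  · rw [MI'_triple σ _ _ _ {0, 1, 2, 3} {1, 2, 3} {0, 2, 3} {0, 1}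
        (by decide) (by decide) (by decide) (by decide) (by decide) (by decide) (by decide),
      MI'_triple σ _ _ _ {0, 1, 2, 3} {1, 2, 3} {0, 2} {0, 1, 3}
        (by decide) (by decide) (by decide) (by decide) (by decide) (by decide) (by decide),
      MI'_triple σ _ _ _ {0, 1, 2, 3} {1, 2} {0, 2, 3} {0, 1, 3}
        (by decide) (by decide) (by decide) (by decide) (by decide) (by decide) (by decide)]
    have a1 := ssa_Sv' σ hσ {0, 2} {1, 2} {0, 1, 2} {2} (by decide) (by decide)
    have a2 := ssa_Sv' σ hσ {0, 1, 2} {0, 1, 3} {0, 1, 2, 3} {0, 1} (by decide) (by decide)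
    have a3 := sa_Sv' σ hσ {0, 1, 3} {2} {0, 1, 2, 3} (by decide) (by decide)
    linarith
end
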